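/- arXiv:0908.2277 — 4 statements merged into one kernel-verified Lean document; each statement's English description precedes it below -/
import Mathlib

section
/- Lemma 1, upper bound: For every integer N_t ≥ 2 and every real B ≥ 0, setting n = 2^B and B̄ = B/N_t, the quantity E[ν] := 1 − n·Beta(n, N_t/(N_t−1)) satisfies E[ν] ≤ 1 − 2^{−B̄} + (1 + (γ − 1)·2^{−B̄} + 2^{−B̄·N_t})/(N_t − 1), where γ is the Euler–Mascheroni constant. -/
/-- The Euler Beta function `Beta(x,y) = ∫₀¹ t^{x-1} (1-t)^{y-1} dt`. -/
noncomputable def Beta (x y : ℝ) : ℝ := ∫ t in (0:ℝ)..1, t ^ (x - 1) * (1 - t) ^ (y - 1)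

lemma beta_aux (x y : ℝ) (hx : 0 < x) (hy : 0 < y) :
    Beta x y = Real.Gamma x * Real.Gamma y / Real.Gamma (x + y) := by
  have h := ProbabilityTheory.beta_eq_betaIntegralReal x y hx hy
  rw [ProbabilityTheory.beta] at h
  rw [h, Beta, Complex.betaIntegral]
  have : ∫ t in (0:ℝ)..1, (t:ℂ) ^ ((x:ℂ) - 1) * (1 - (t:ℂ)) ^ ((y:ℂ) - 1)
      = ((∫ t in (0:ℝ)..1, t ^ (x - 1) * (1 - t) ^ (y - 1) : ℝ) : ℂ) := by
    rw [← intervalIntegral.integral_ofReal]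
    apply intervalIntegral.integral_congr
    intro t ht
    rw [Set.uIcc_of_le zero_le_one] at ht
    simp only
    rw [Complex.ofReal_mul, Complex.ofReal_cpow ht.1, Complex.ofReal_cpow (by linarith [ht.2])]
    push_cast
    rfl
  rw [this, Complex.ofReal_re]

lemma gamma_aux (n s : ℝ) (hn : 0 < n) (hs : 0 < s) (hs1 : s ≤ 1) :
    Real.Gamma (n + 1 + s) ≤ Real.Gamma (n + 1) * (n + 1) ^ s := by
  have hG := Real.Gamma_pos_of_pos (show 0 < n + 1 by linarith)
  have h2 : Real.Gamma (n + 1 + 1) = (n + 1) * Real.Gamma (n + 1) :=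
    Real.Gamma_add_one (by linarith)
  rcases hs1.lt_or_eq with h | h
  · have := Real.Gamma_mul_add_mul_le_rpow_Gamma_mul_rpow_Gamma (s := n + 1) (t := n + 1 + 1)
      (a := 1 - s) (b := s) (by linarith) (by linarith) (by linarith) hs (by ring)
    rw [show (1 - s) * (n + 1) + s * (n + 1 + 1) = n + 1 + s by ring, h2,
      Real.mul_rpow (by linarith) hG.le] at this
    calc _ ≤ _ := this
      _ = (Real.Gamma (n+1) ^ (1 - s) * Real.Gamma (n+1) ^ s) * (n + 1) ^ s := by ring
      _ = _ := by rw [← Real.rpow_add hG]; simp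
  · subst h
    rw [h2, Real.rpow_one, mul_comm]

lemma gamma_tangent (s : ℝ) (hs : 0 < s) :
    1 - Real.eulerMascheroniConstant * s ≤ Real.Gamma (1 + s) := by
  have h := Real.convexOn_Gamma.le_slope_of_hasDerivAt (x := 1) (y := 1 + s) (by simp)
    (by simp; linarith) (by linarith) Real.hasDerivAt_Gamma_one
  rw [slope_def_field, Real.Gamma_one, le_div_iff₀ (by linarith)] at h
  linarith

lemma main_aux (n s : ℝ) (hn : 1 ≤ n) (hs : 0 < s) (hs1 : s ≤ 1) :
    n ^ (-s) * (1 - Real.eulerMascheroniConstant * s) * (1 - s * n⁻¹) ≤ n * Beta n (1 + s) := by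
  have hn0 : 0 < n := by linarith
  have hγ := Real.eulerMascheroniConstant_lt_two_thirds
  have hγ0 := Real.one_half_lt_eulerMascheroniConstant
  have hc : 0 < n⁻¹ := by positivity
  rw [beta_aux n (1 + s) hn0 (by linarith)]
  have hG := Real.Gamma_pos_of_pos (show 0 < n + 1 by linarith)
  have hG2 := Real.Gamma_pos_of_pos (show 0 < n + 1 + s by linarith)
  have e : n * (Real.Gamma n * Real.Gamma (1 + s) / Real.Gamma (n + (1 + s)))
      = Real.Gamma (n + 1) * Real.Gamma (1 + s) / Real.Gamma (n + 1 + s) := by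
    rw [Real.Gamma_add_one hn0.ne', ← add_assoc]; ring
  rw [e, le_div_iff₀ hG2]
  have hsc : 0 ≤ 1 - s * n⁻¹ := by
    have : n⁻¹ ≤ 1 := inv_le_one_of_one_le₀ hn
    nlinarith
  have hγs : 0 ≤ 1 - Real.eulerMascheroniConstant * s := by nlinarith
  have hb : (n + 1) ^ s ≤ n ^ s * (1 + s * n⁻¹) := by
    rw [show n + 1 = n * (1 + n⁻¹) by field_simp, Real.mul_rpow hn0.le (by linarith)]
    gcongr
    exact rpow_one_add_le_one_add_mul_self (by linarith) hs.le hs1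
  have hp : n ^ (-s) * n ^ s = 1 := by rw [← Real.rpow_add hn0]; simp
  have hp0 : 0 < n ^ (-s) := by positivity
  calc _ ≤ n ^ (-s) * (1 - Real.eulerMascheroniConstant * s) * (1 - s * n⁻¹) *
        (Real.Gamma (n + 1) * (n ^ s * (1 + s * n⁻¹))) := by
        gcongr
        exact (gamma_aux n s hn0 hs hs1).trans (by gcongr)
    _ = (n ^ (-s) * n ^ s) * ((1 - Real.eulerMascheroniConstant * s) * Real.Gamma (n + 1)) *
        (1 - (s * n⁻¹) ^ 2) := by ring
    _ ≤ 1 * (Real.Gamma (1 + s) * Real.Gamma (n + 1)) * 1 := by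
        rw [hp]
        have := gamma_tangent s hs
        have h3 : 0 ≤ (1 - Real.eulerMascheroniConstant * s) * Real.Gamma (n + 1) := by positivity
        have h4 : (1 - Real.eulerMascheroniConstant * s) * Real.Gamma (n + 1) ≤
          Real.Gamma (1 + s) * Real.Gamma (n + 1) := by gcongr
        nlinarith [mul_nonneg h3 (sq_nonneg (s * n⁻¹))]
    _ = _ := by ring

/-- Lemma 1, upper bound: for `N_t ≥ 2` and `B ≥ 0`, with `n = 2^B` and `B̄ = B/N_t`,
`E[ν] = 1 − n·Beta(n, N_t/(N_t−1))` satisfies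
`E[ν] ≤ 1 − 2^{−B̄} + (1 + (γ − 1)·2^{−B̄} + 2^{−B̄·N_t})/(N_t − 1)`. -/
theorem rvq_mean_upper_bound (Nt : ℕ) (hNt : 2 ≤ Nt) (B : ℝ) (hB : 0 ≤ B) :
    1 - (2:ℝ) ^ B * Beta ((2:ℝ) ^ B) ((Nt : ℝ) / ((Nt : ℝ) - 1)) ≤
      1 - (2:ℝ) ^ (-(B / (Nt : ℝ))) +
        (1 + (Real.eulerMascheroniConstant - 1) * (2:ℝ) ^ (-(B / (Nt : ℝ)))
            + (2:ℝ) ^ (-(B / (Nt : ℝ)) * (Nt : ℝ))) / ((Nt : ℝ) - 1) := by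
  have hN : (2:ℝ) ≤ Nt := by exact_mod_cast hNt
  have hN1 : (0:ℝ) < (Nt:ℝ) - 1 := by linarith
  obtain ⟨s, hsdef⟩ : ∃ s : ℝ, s = 1 / ((Nt:ℝ) - 1) := ⟨_, rfl⟩
  have hs : 0 < s := by rw [hsdef]; positivity
  have hs1 : s ≤ 1 := by rw [hsdef, div_le_one hN1]; linarith
  have e1 : (Nt:ℝ) / ((Nt:ℝ) - 1) = 1 + s := by rw [hsdef]; field_simp; ring
  have hn : (1:ℝ) ≤ 2 ^ B := Real.one_le_rpow (by norm_num) hB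
  have e2 : (2:ℝ) ^ (-(B / (Nt : ℝ)) * (Nt : ℝ)) = ((2:ℝ) ^ B)⁻¹ := by
    rw [← Real.rpow_neg (by norm_num)]; congr 1; field_simp
  have hm := main_aux (2 ^ B) s hn hs hs1
  have e3 : ((2:ℝ) ^ B) ^ (-s) = ((2:ℝ) ^ (-(B / (Nt : ℝ)))) ^ (1 + s) := by
    rw [← Real.rpow_mul (by norm_num), ← Real.rpow_mul (by norm_num), ← e1, hsdef]
    congr 1; field_simp
  rw [e1, e2, div_eq_mul_one_div _ ((Nt:ℝ) - 1), ← hsdef]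
  rw [e3] at hm
  have hq0 : 0 < (2:ℝ) ^ (-(B / (Nt : ℝ))) := by positivity
  have hq1 : (2:ℝ) ^ (-(B / (Nt : ℝ))) ≤ 1 :=
    Real.rpow_le_one_of_one_le_of_nonpos (by norm_num) (by
      have : 0 ≤ B / (Nt:ℝ) := by positivity
      linarith)
  have hc : 0 < ((2:ℝ) ^ B)⁻¹ := by positivity
  generalize ((2:ℝ) ^ (-(B / (Nt : ℝ)))) = q at *
  generalize ((2:ℝ) ^ B)⁻¹ = c at *
  have hb := one_add_mul_self_le_rpow_one_add (s := q - 1) (by linarith) (p := 1 + s) (by linarith)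
  rw [show 1 + (q - 1) = q by ring] at hb
  have hp1 : q ^ (1 + s) ≤ 1 := Real.rpow_le_one hq0.le hq1 (by linarith)
  have hp0 : 0 < q ^ (1 + s) := by positivity
  generalize q ^ (1 + s) = p at *
  have hγ := Real.eulerMascheroniConstant_lt_two_thirds
  have hγ0 := Real.one_half_lt_eulerMascheroniConstant
  generalize Real.eulerMascheroniConstant = g at *
  have hgs : 0 ≤ 1 - g * s := by nlinarith
  have t1 := mul_le_mul_of_nonneg_left hb hgs
  have t2 : 0 ≤ s ^ 2 * g * (1 - q) :=
    mul_nonneg (by positivity) (by linarith)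
  have t3 : 0 ≤ c * s * (1 - p) := mul_nonneg (by positivity) (by linarith)
  have t4 : 0 ≤ p * (g * s) * (s * c) := by positivity
  linarith
end

section
/- Lemma 1, lower bound: For every integer N_t ≥ 2 and every real B ≥ 0, setting n = 2^B and B̄ = B/N_t, the quantity E[ν] := 1 − n·Beta(n, N_t/(N_t−1)) satisfies E[ν] ≥ 1 − 2^{−B̄}; equivalently, n·Beta(n, 1 + 1/(N_t−1)) ≤ 2^{−B̄}. -/
theorem beta_aux_s3 (n a : ℝ) (hn : 1 ≤ n) (ha : 0 ≤ a) (ha1 : a ≤ 1) :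
    n * Beta n (1 + a) ≤ (n + 1) ^ (-a) := by
  have hn0 : 0 < n := by linarith
  have hm : 0 < n + 1 := by linarith
  have c1 : Continuous fun t : ℝ => t ^ (n - 1) :=
    Real.continuous_rpow_const (by linarith)
  have c2 : Continuous fun t : ℝ => t ^ n := Real.continuous_rpow_const hn0.le
  have c3 : Continuous fun t : ℝ => (1 - t) ^ (1 + a - 1) :=
    (Real.continuous_rpow_const (by linarith : 0 ≤ 1 + a - 1)).comp (by fun_prop : Continuous fun t : ℝ => 1 - t)
  have key : Beta n (1 + a) ≤ ∫ t in (0:ℝ)..1,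
      ((n + 1) ^ (-a) * (1 + a * n) * t ^ (n - 1) - (n + 1) ^ (-a) * a * (n + 1) * t ^ n) := by
    unfold Beta
    apply intervalIntegral.integral_mono_on zero_le_one
    · exact (c1.mul c3).intervalIntegrable _ _
    · exact ((continuous_const.mul c1).sub (continuous_const.mul c2)).intervalIntegrable _ _
    · intro t ht
      have hx : 0 ≤ 1 - t := by linarith [ht.2]
      have h1 : ((n + 1) * (1 - t)) ^ a ≤ 1 + a * ((n + 1) * (1 - t) - 1) := by
        have := rpow_one_add_le_one_add_mul_self
          (s := (n + 1) * (1 - t) - 1) (by nlinarith [mul_nonneg hm.le hx]) ha ha1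
        simpa using this
      have h2 : (1 - t) ^ a = (n + 1) ^ (-a) * ((n + 1) * (1 - t)) ^ a := by
        rw [Real.mul_rpow hm.le hx, ← mul_assoc, ← Real.rpow_add hm]; simp
      have h3 : t ^ n = t ^ (n - 1) * t := by
        rcases eq_or_lt_of_le ht.1 with h | h
        · rw [← h, Real.zero_rpow hn0.ne']; simp
        · rw [Real.rpow_sub_one h.ne']; field_simp
      have h4 : 0 ≤ t ^ (n - 1) := Real.rpow_nonneg ht.1 _
      have h5 : 0 ≤ (n + 1) ^ (-a) := Real.rpow_nonneg hm.le _
      rw [show 1 + a - 1 = a by ring, h2, h3]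
      have := mul_le_mul_of_nonneg_left h1 (mul_nonneg h4 h5)
      linarith
  have val : (∫ t in (0:ℝ)..1,
      ((n + 1) ^ (-a) * (1 + a * n) * t ^ (n - 1) - (n + 1) ^ (-a) * a * (n + 1) * t ^ n))
      = (n + 1) ^ (-a) / n := by
    rw [intervalIntegral.integral_sub ((c1.intervalIntegrable _ _).const_mul _)
      ((c2.intervalIntegrable _ _).const_mul _),
      intervalIntegral.integral_const_mul, intervalIntegral.integral_const_mul,
      integral_rpow (Or.inl (by linarith)), integral_rpow (Or.inl (by linarith))]
    rw [sub_add_cancel, Real.zero_rpow hn0.ne', Real.zero_rpow hm.ne', Real.one_rpow, Real.one_rpow]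
    field_simp
    ring
  rw [val] at key
  calc n * Beta n (1 + a) ≤ n * ((n + 1) ^ (-a) / n) := by gcongr
    _ = _ := by field_simp

/-- Lemma 1, lower bound: for `N_t ≥ 2` and `B ≥ 0`, with `n = 2^B` and `B̄ = B/N_t`,
`E[ν] = 1 − n·Beta(n, N_t/(N_t−1))` satisfies `E[ν] ≥ 1 − 2^{−B̄}`; equivalently,
`n·Beta(n, 1 + 1/(N_t−1)) ≤ 2^{−B̄}`. -/
theorem rvq_mean_lower_bound (Nt : ℕ) (hNt : 2 ≤ Nt) (B : ℝ) (hB : 0 ≤ B) :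
    1 - (2:ℝ) ^ B * Beta ((2:ℝ) ^ B) ((Nt : ℝ) / ((Nt : ℝ) - 1)) ≥
      1 - (2:ℝ) ^ (-(B / (Nt : ℝ))) ∧
    (2:ℝ) ^ B * Beta ((2:ℝ) ^ B) (1 + 1 / ((Nt : ℝ) - 1)) ≤ (2:ℝ) ^ (-(B / (Nt : ℝ))) := by
  have hN : (2:ℝ) ≤ Nt := by exact_mod_cast hNt
  have hN1 : 0 < (Nt:ℝ) - 1 := by linarith
  have hn : 1 ≤ (2:ℝ) ^ B := Real.one_le_rpow (by norm_num) hB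
  have main : (2:ℝ) ^ B * Beta ((2:ℝ) ^ B) (1 + 1 / ((Nt : ℝ) - 1))
      ≤ (2:ℝ) ^ (-(B / (Nt : ℝ))) := by
    have ha : 0 ≤ 1 / ((Nt:ℝ) - 1) := by positivity
    refine (beta_aux_s3 _ _ hn ha (by rw [div_le_one hN1]; linarith)).trans ?_
    calc ((2:ℝ) ^ B + 1) ^ (-(1 / ((Nt:ℝ) - 1))) ≤ ((2:ℝ) ^ B) ^ (-(1 / ((Nt:ℝ) - 1))) :=
          Real.rpow_le_rpow_of_nonpos (by positivity) (by linarith) (by linarith)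
      _ ≤ ((2:ℝ) ^ B) ^ (-(1 / (Nt:ℝ))) := by
          apply Real.rpow_le_rpow_of_exponent_le hn
          apply neg_le_neg
          exact one_div_le_one_div_of_le hN1 (by linarith)
      _ = _ := by
          rw [← Real.rpow_mul (by norm_num)]
          congr 1
          ring
  refine ⟨?_, main⟩
  have : (Nt:ℝ) / ((Nt:ℝ) - 1) = 1 + 1 / ((Nt:ℝ) - 1) := by
    field_simp
    ring
  rw [this]
  linarith
end

section
/- Asymptotics of the optimized capacity upper bound (proof of Theorem 2): Fix reals ρ > 0, L̄ > 0, μ > 0. For each integer N_t ≥ 2 define on the compact set K = {(T̄, B̄) : T̄ ≥ 0, B̄ ≥ 0, T̄ + μ·B̄ ≤ L̄} the function F_{N_t}(T̄, B̄) = ((L̄ − T̄ − μ·B̄)/L̄)·log(1 + ρ·σ_w²(T̄) + ρ·(1 − σ_w²(T̄))·N_t·(1 − 2^{−B̄} + (1 + (γ−1)·2^{−B̄} + 2^{−B̄·N_t})/(N_t − 1))), where σ_w²(T̄) = 1 − T̄/(1 + ρ^{−1}) if T̄ < 1 and σ_w²(T̄) = 1/(1 + ρ·T̄) if T̄ ≥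 1. Then F_{N_t} attains a maximum on K, and any choice of maximizers (T̄°(N_t), B̄°(N_t)) satisfies T̄°(N_t)·log N_t → L̄ and B̄°(N_t)·log N_t → L̄/μ as N_t → ∞; moreover the maximum value M(N_t) satisfies M(N_t) − log(ρ·N_t) + 2·log log N_t → log(L̄²·log 2) − log(μ·(1 + ρ^{−1})) − 2. -/
open Filter Real

/-- MMSE channel-estimation error variance `σ_w²` as a function of the normalized training
length `T̄`, for SNR `ρ` (eq. (21) of the paper). -/
noncomputable def sigmaW2 (ρ Tbar : ℝ) : ℝ :=
  if Tbar < 1 then 1 - Tbar / (1 + ρ⁻¹) else 1 / (1 + ρ * Tbar)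

/-- The feasible set of normalized training/feedback pairs `(T̄, B̄)`:
`T̄ ≥ 0`, `B̄ ≥ 0`, `T̄ + μ·B̄ ≤ L̄`. -/
def feasible (μ L : ℝ) : Set (ℝ × ℝ) :=
  {p | 0 ≤ p.1 ∧ 0 ≤ p.2 ∧ p.1 + μ * p.2 ≤ L}

/-- The normalized upper bound `F_{N_t}(T̄, B̄)` on MISO beamforming capacity with
normalized training `T̄`, normalized feedback `B̄`, coherence time `L̄`, conversion factor `μ`,
and SNR `ρ` (Theorem 1 of the paper combined with the MMSE estimation error formula). -/
noncomputable def capUB (ρ L μ : ℝ) (Nt : ℕ) (p : ℝ × ℝ) : ℝ :=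
  ((L - p.1 - μ * p.2) / L) *
    Real.log (1 + ρ * sigmaW2 ρ p.1 + ρ * (1 - sigmaW2 ρ p.1) * (Nt : ℝ) *
      (1 - (2:ℝ) ^ (-p.2) +
        (1 + (Real.eulerMascheroniConstant - 1) * (2:ℝ) ^ (-p.2)
          + (2:ℝ) ^ (-(p.2 * (Nt : ℝ)))) / ((Nt : ℝ) - 1)))


lemma aux_log_tendsto (y : ℕ → ℝ) (hy : ∀ᶠ k in atTop, 0 < y k)
    (h : Tendsto (fun k => y k - 1 - Real.log (y k)) atTop (nhds 0)) :
    Tendsto y atTop (nhds 1) := by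
  have h1 : Tendsto (fun k => (√(y k) - 1) ^ 2) atTop (nhds 0) := by
    refine tendsto_of_tendsto_of_tendsto_of_le_of_le' tendsto_const_nhds h
      (Eventually.of_forall fun k => sq_nonneg _) ?_
    filter_upwards [hy] with k hk
    have hz : 0 < √(y k) := Real.sqrt_pos.2 hk
    have h2 := Real.log_le_sub_one_of_pos hz
    rw [Real.log_sqrt hk.le] at h2
    have h3 := Real.sq_sqrt hk.le
    nlinarith
  have h2 : Tendsto (fun k => √(y k) - 1) atTop (nhds 0) := by
    rw [tendsto_zero_iff_abs_tendsto_zero]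
    have := h1.sqrt
    simpa [Real.sqrt_sq_eq_abs, Function.comp_def] using this
  have h3 : Tendsto (fun k => (√(y k) - 1 + 1) ^ 2) atTop (nhds ((0 + 1) ^ 2)) :=
    (h2.add_const 1).pow 2
  have h4 : Tendsto (fun k => (√(y k) - 1 + 1) ^ 2) atTop (nhds 1) := by simpa using h3
  refine h4.congr' ?_
  filter_upwards [hy] with k hk
  rw [sub_add_cancel, Real.sq_sqrt hk.le]

lemma aux_abstract (g u v n δ ε r : ℕ → ℝ)
    (hn : Tendsto n atTop atTop) (hδ : Tendsto δ atTop (nhds 0)) (hε : Tendsto ε atTop (nhds 0))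
    (hr : Tendsto r atTop (nhds (-2)))
    (hδ0 : ∀ᶠ k in atTop, 0 < δ k)
    (hu : ∀ᶠ k in atTop, 0 ≤ u k) (hv : ∀ᶠ k in atTop, 0 ≤ v k)
    (hs : ∀ᶠ k in atTop, u k + v k ≤ n k)
    (hrg : ∀ᶠ k in atTop, r k ≤ g k)
    (hg : ∀ᶠ k in atTop, g k ≤ -(u k + v k) + ε k * (u k + v k)
      + (1 - (u k + v k) / n k) * Real.log (u k * v k + δ k)) :
    Tendsto u atTop (nhds 1) ∧ Tendsto v atTop (nhds 1) ∧ Tendsto g atTop (nhds (-2)) := by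
  set x : ℕ → ℝ := fun k => (u k + v k) / 2 + √(δ k) with hx
  have hη : Tendsto (fun k => √(δ k)) atTop (nhds 0) := by simpa using hδ.sqrt
  have hx0 : ∀ᶠ k in atTop, 0 < x k := by
    filter_upwards [hδ0, hu, hv] with k h1 h2 h3
    have := Real.sqrt_pos.2 h1
    simp only [hx]; linarith
  have hlog : ∀ᶠ k in atTop, Real.log (u k * v k + δ k) ≤ 2 * Real.log (x k) := by
    filter_upwards [hδ0, hu, hv] with k h1 h2 h3
    have h4 : Real.log ((x k) ^ 2) = 2 * Real.log (x k) := by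
      rw [Real.log_pow]; norm_num
    rw [← h4]
    apply Real.log_le_log (by positivity)
    have h5 := Real.sq_sqrt h1.le
    have h6 := Real.sqrt_nonneg (δ k)
    simp only [hx]
    nlinarith [sq_nonneg (u k - v k), mul_nonneg (add_nonneg h2 h3) h6]
  have hninv : Tendsto (fun k => (n k)⁻¹) atTop (nhds 0) := hn.inv_tendsto_atTop
  have hε1 : Tendsto (fun k => 1 - ε k) atTop (nhds 1) := by simpa using hε.const_sub 1
  have hεpos : ∀ᶠ k in atTop, 0 < 1 - ε k := hε1.eventually (lt_mem_nhds one_pos)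
  set e : ℕ → ℝ := fun k => 2 * √(δ k) * (1 - ε k) + 4 * (n k)⁻¹ - 2 * Real.log (1 - ε k) with he
  have he0 : Tendsto e atTop (nhds 0) := by
    have h1 := (((hη.const_mul 2).mul hε1).add (hninv.const_mul 4)).sub
      ((hε1.log one_ne_zero).const_mul 2)
    simpa using h1
  have hgy : ∀ᶠ k in atTop, g k ≤ -2 * ((1 - ε k) * x k) + 2 * Real.log ((1 - ε k) * x k) + e k := by
    filter_upwards [hg, hlog, hx0, hεpos, hs, hn.eventually_gt_atTop 0, hu, hv]
      with k h1 h2 h3 h4 h5 h6 h7 h8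
    rw [Real.log_mul h4.ne' h3.ne']
    have hw : 0 ≤ 1 - (u k + v k) / n k := by
      rw [sub_nonneg, div_le_one h6]; exact h5
    have h9 := mul_le_mul_of_nonneg_left h2 hw
    have h10 : -((u k + v k) / n k) * (2 * Real.log (x k)) ≤ 4 * (n k)⁻¹ := by
      have hi : 0 < (n k)⁻¹ := by positivity
      have hA : -(u k + v k) * (2 * Real.log (x k)) ≤ 4 := by
        rcases le_total 0 (Real.log (x k)) with hl | hl
        · nlinarith [mul_nonneg (add_nonneg h7 h8) hl]
        · have hle : u k + v k ≤ 2 * x k := by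
            simp only [hx]; linarith [Real.sqrt_nonneg (δ k)]
          have hb := Real.one_sub_inv_le_log_of_pos h3
          have hc : x k * (1 - (x k)⁻¹) ≤ x k * Real.log (x k) :=
            mul_le_mul_of_nonneg_left hb h3.le
          rw [mul_sub, mul_inv_cancel₀ h3.ne'] at hc
          nlinarith [mul_nonneg (sub_nonneg.2 hle) (neg_nonneg.2 hl)]
      have := mul_le_mul_of_nonneg_right hA hi.le
      calc _ = -(u k + v k) * (2 * Real.log (x k)) * (n k)⁻¹ := by ring
        _ ≤ _ := this
    have h11 : u k + v k = 2 * x k - 2 * √(δ k) := by simp only [hx]; ring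
    simp only [he]
    have h12 : -(u k + v k) + ε k * (u k + v k) = -(1 - ε k) * (2 * x k - 2 * √(δ k)) := by
      rw [h11]; ring
    nlinarith
  have hy0 : ∀ᶠ k in atTop, 0 < (1 - ε k) * x k := by
    filter_upwards [hεpos, hx0] with k h1 h2 using mul_pos h1 h2
  have hy : Tendsto (fun k => (1 - ε k) * x k) atTop (nhds 1) := by
    apply aux_log_tendsto _ hy0
    have h1 : Tendsto (fun k => (-2 - r k + e k) / 2) atTop (nhds 0) := by
      simpa using ((hr.const_sub (-2)).add he0).div_const 2
    refine tendsto_of_tendsto_of_tendsto_of_le_of_le' tendsto_const_nhds h1 ?_ ?_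
    · filter_upwards [hy0] with k hk
      linarith [Real.log_le_sub_one_of_pos hk]
    · filter_upwards [hgy, hrg] with k h1 h2
      linarith
  have hg2 : Tendsto g atTop (nhds (-2)) := by
    have h1 : Tendsto (fun k => -2 + e k) atTop (nhds (-2)) := by simpa using he0.const_add (-2)
    refine tendsto_of_tendsto_of_tendsto_of_le_of_le' hr h1 hrg ?_
    filter_upwards [hgy, hy0] with k h1 h2
    linarith [Real.log_le_sub_one_of_pos h2]
  have hx1 : Tendsto x atTop (nhds 1) := by
    have h1 := hy.div hε1 one_ne_zero
    rw [div_one] at h1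
    refine h1.congr' ?_
    filter_upwards [hεpos] with k hk
    simp only [Pi.div_apply]
    field_simp
  have hs2 : Tendsto (fun k => u k + v k) atTop (nhds 2) := by
    have h1 := (hx1.const_mul 2).sub (hη.const_mul 2)
    simp only [mul_one, mul_zero, sub_zero] at h1
    refine h1.congr fun k => ?_
    simp only [hx]; ring
  have hw1 : Tendsto (fun k => 1 - (u k + v k) / n k) atTop (nhds 1) := by
    have := (hs2.mul hninv).const_sub 1
    simpa [div_eq_mul_inv] using this
  have hl0 : Tendsto (fun k => Real.log (u k * v k + δ k)) atTop (nhds 0) := by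
    have h1 : Tendsto (fun k => (r k + (u k + v k) - ε k * (u k + v k)) / (1 - (u k + v k) / n k))
        atTop (nhds 0) := by
      have := ((hr.add hs2).sub (hε.mul hs2)).div hw1 one_ne_zero
      simpa [Pi.div_def] using this
    have h2 : Tendsto (fun k => 2 * Real.log (x k)) atTop (nhds 0) := by
      simpa using (hx1.log one_ne_zero).const_mul 2
    refine tendsto_of_tendsto_of_tendsto_of_le_of_le' h1 h2 ?_ hlog
    filter_upwards [hw1.eventually (lt_mem_nhds one_pos), hg, hrg] with k h3 h4 h5
    rw [div_le_iff₀ h3]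
    linarith
  have huv : Tendsto (fun k => u k * v k) atTop (nhds 1) := by
    have h1 := ((Real.continuous_exp.tendsto 0).comp hl0).sub hδ
    simp only [Real.exp_zero, sub_zero] at h1
    refine h1.congr' ?_
    filter_upwards [hδ0, hu, hv] with k h1 h2 h3
    simp only [Function.comp]
    rw [Real.exp_log (by positivity)]; ring
  have hd : Tendsto (fun k => u k - v k) atTop (nhds 0) := by
    rw [tendsto_zero_iff_abs_tendsto_zero]
    have h1 := ((hs2.pow 2).sub (huv.const_mul 4)).sqrt
    have h2 : √((2:ℝ) ^ 2 - 4 * 1) = 0 := by norm_num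
    rw [h2] at h1
    refine h1.congr fun k => ?_
    rw [show (u k + v k) ^ 2 - 4 * (u k * v k) = (u k - v k) ^ 2 by ring, Real.sqrt_sq_eq_abs]
    rfl
  refine ⟨?_, ?_, hg2⟩
  · have := (hs2.add hd).div_const 2
    norm_num at this
    refine this.congr fun k => by ring
  · have := (hs2.sub hd).div_const 2
    norm_num at this
    refine this.congr fun k => by ring

lemma aux_sigma_cont (ρ : ℝ) (hρ : 0 < ρ) : Continuous (sigmaW2 ρ) := by
  have h : sigmaW2 ρ = fun T => if 1 ≤ T then 1 / (1 + ρ * max T 1) else 1 - T / (1 + ρ⁻¹) := by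
    funext T
    unfold sigmaW2
    by_cases hT : T < 1
    · rw [if_pos hT, if_neg (not_le.2 hT)]
    · rw [if_neg hT, if_pos (not_lt.1 hT), max_eq_left (not_lt.1 hT)]
  rw [h]
  apply Continuous.if_le
  · apply Continuous.div continuous_const (by fun_prop)
    intro T
    have : 0 < ρ * max T 1 := mul_pos hρ (lt_of_lt_of_le one_pos (le_max_right _ _))
    positivity
  · fun_prop
  · fun_prop
  · fun_prop
  · intro T hT
    rw [← hT]
    simp only [max_self]
    field_simp
    ring

lemma aux_sigma_bounds (ρ T : ℝ) (hρ : 0 < ρ) (hT : 0 ≤ T) :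
    0 ≤ sigmaW2 ρ T ∧ sigmaW2 ρ T ≤ 1 ∧ 1 - sigmaW2 ρ T ≤ T / (1 + ρ⁻¹) := by
  unfold sigmaW2
  have hi : 0 < ρ⁻¹ := inv_pos.2 hρ
  split_ifs with h
  · refine ⟨?_, ?_, by linarith⟩
    · rw [sub_nonneg, div_le_one (by positivity)]; linarith
    · have : 0 ≤ T / (1 + ρ⁻¹) := by positivity
      linarith
  · push Not at h
    refine ⟨by positivity, ?_, ?_⟩
    · rw [div_le_one (by positivity)]; nlinarith
    · have h1 : 1 - 1 / (1 + ρ * T) = ρ * T / (1 + ρ * T) := by field_simp; ring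
      have h2 : T / (1 + ρ⁻¹) = ρ * T / (1 + ρ) := by field_simp; ring
      rw [h1, h2]
      apply div_le_div_of_nonneg_left (by positivity) (by positivity)
      nlinarith

lemma aux_two_pow_bounds (B : ℝ) :
    1 - (2:ℝ) ^ (-B) ≤ B * Real.log 2 ∧ B * Real.log 2 * (2:ℝ) ^ (-B) ≤ 1 - (2:ℝ) ^ (-B) := by
  have h : ∀ x : ℝ, (2:ℝ) ^ x = Real.exp (x * Real.log 2) := fun x => by
    rw [Real.rpow_def_of_pos two_pos, mul_comm]
  constructor
  · rw [h]; have := Real.add_one_le_exp (-B * Real.log 2); linarith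
  · have h1 : (2:ℝ) ^ B * (2:ℝ) ^ (-B) = 1 := by
      rw [← Real.rpow_add two_pos]; simp
    have h2 : B * Real.log 2 + 1 ≤ (2:ℝ) ^ B := by rw [h]; exact Real.add_one_le_exp _
    have h3 : (0:ℝ) < (2:ℝ) ^ (-B) := by positivity
    nlinarith [mul_le_mul_of_nonneg_right h2 h3.le]

/-- the correction term -/
lemma aux_corr (B N : ℝ) (hN : 2 ≤ N) (hB : 0 ≤ B) :
    0 ≤ (1 + (Real.eulerMascheroniConstant - 1) * (2:ℝ) ^ (-B) + (2:ℝ) ^ (-(B * N))) / (N - 1) ∧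
    N * ((1 + (Real.eulerMascheroniConstant - 1) * (2:ℝ) ^ (-B) + (2:ℝ) ^ (-(B * N))) / (N - 1))
      ≤ 4 := by
  have h1 := Real.one_half_lt_eulerMascheroniConstant
  have h2 := Real.eulerMascheroniConstant_lt_two_thirds
  have h3 : (0:ℝ) < (2:ℝ) ^ (-B) := by positivity
  have h4 : (0:ℝ) < (2:ℝ) ^ (-(B * N)) := by positivity
  have h5 : (2:ℝ) ^ (-B) ≤ 1 := Real.rpow_le_one_of_one_le_of_nonpos one_le_two (by linarith)
  have h6 : (2:ℝ) ^ (-(B * N)) ≤ 1 :=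
    Real.rpow_le_one_of_one_le_of_nonpos one_le_two (by nlinarith)
  have h7 : 0 < N - 1 := by linarith
  set a := (2:ℝ) ^ (-B)
  set b := (2:ℝ) ^ (-(B * N))
  set γ := Real.eulerMascheroniConstant
  have h8 : 0 ≤ 1 + (γ - 1) * a + b := by nlinarith
  have h9 : 1 + (γ - 1) * a + b ≤ 2 := by nlinarith
  refine ⟨div_nonneg h8 h7.le, ?_⟩
  rw [← mul_div_assoc, div_le_iff₀ h7]
  nlinarith

/-- argument of the log -/
noncomputable def auxArg (ρ N T B : ℝ) : ℝ :=
  1 + ρ * sigmaW2 ρ T + ρ * (1 - sigmaW2 ρ T) * N *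
      (1 - (2:ℝ) ^ (-B) +
        (1 + (Real.eulerMascheroniConstant - 1) * (2:ℝ) ^ (-B)
          + (2:ℝ) ^ (-(B * N))) / (N - 1))

lemma aux_arg_lower (ρ N T B : ℝ) (hρ : 0 < ρ) (hN : 2 ≤ N) (hT : 0 ≤ T) (hB : 0 ≤ B) :
    1 + ρ * (1 - sigmaW2 ρ T) * N * (B * Real.log 2 * (2:ℝ) ^ (-B)) ≤ auxArg ρ N T B := by
  obtain ⟨s0, s1, s2⟩ := aux_sigma_bounds ρ T hρ hT
  obtain ⟨c0, c1⟩ := aux_corr B N hN hB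
  obtain ⟨p0, p1⟩ := aux_two_pow_bounds B
  unfold auxArg
  have h1 : 0 ≤ ρ * (1 - sigmaW2 ρ T) * N :=
    mul_nonneg (mul_nonneg hρ.le (by linarith)) (by linarith)
  have h2 := mul_le_mul_of_nonneg_left (add_le_add p1 c0) h1
  have h3 := mul_nonneg hρ.le s0
  linarith

lemma aux_arg_ge_one (ρ N T B : ℝ) (hρ : 0 < ρ) (hN : 2 ≤ N) (hT : 0 ≤ T) (hB : 0 ≤ B) :
    1 ≤ auxArg ρ N T B := by
  refine le_trans ?_ (aux_arg_lower ρ N T B hρ hN hT hB)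
  obtain ⟨s0, s1, s2⟩ := aux_sigma_bounds ρ T hρ hT
  have h1 : 0 ≤ ρ * (1 - sigmaW2 ρ T) * N :=
    mul_nonneg (mul_nonneg hρ.le (by linarith)) (by linarith)
  have h2 : 0 ≤ B * Real.log 2 * (2:ℝ) ^ (-B) := by
    have := Real.log_pos one_lt_two
    positivity
  have := mul_nonneg h1 h2
  linarith

lemma aux_arg_upper (ρ N T B : ℝ) (hρ : 0 < ρ) (hN : 2 ≤ N) (hT : 0 ≤ T) (hB : 0 ≤ B) :
    auxArg ρ N T B ≤ (1 + 5 * ρ) + ρ * (T / (1 + ρ⁻¹)) * N * (B * Real.log 2) := by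
  obtain ⟨s0, s1, s2⟩ := aux_sigma_bounds ρ T hρ hT
  obtain ⟨c0, c1⟩ := aux_corr B N hN hB
  obtain ⟨p0, p1⟩ := aux_two_pow_bounds B
  unfold auxArg
  set c := (1 + (Real.eulerMascheroniConstant - 1) * (2:ℝ) ^ (-B)
          + (2:ℝ) ^ (-(B * N))) / (N - 1)
  have hl := Real.log_pos one_lt_two
  have h0 : 0 ≤ ρ * (1 - sigmaW2 ρ T) := mul_nonneg hρ.le (by linarith)
  have h1 : ρ * (1 - sigmaW2 ρ T) * N * (1 - (2:ℝ) ^ (-B)) ≤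
      ρ * (T / (1 + ρ⁻¹)) * N * (B * Real.log 2) := by
    calc _ ≤ ρ * (1 - sigmaW2 ρ T) * N * (B * Real.log 2) :=
          mul_le_mul_of_nonneg_left p0 (mul_nonneg h0 (by linarith))
      _ ≤ _ := by gcongr
  have h2 : ρ * (1 - sigmaW2 ρ T) * (N * c) ≤ ρ * 4 := by
    have h3 : ρ * (1 - sigmaW2 ρ T) ≤ ρ := by nlinarith
    have h4 : 0 ≤ N * c := mul_nonneg (by linarith) c0
    exact mul_le_mul h3 c1 h4 hρ.le
  have h3 : ρ * sigmaW2 ρ T ≤ ρ := by nlinarith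
  linarith

lemma aux_capUB (ρ L μ : ℝ) (N : ℕ) (p : ℝ × ℝ) :
    capUB ρ L μ N p = ((L - p.1 - μ * p.2) / L) * Real.log (auxArg ρ N p.1 p.2) := rfl

lemma aux_exists (ρ L μ : ℝ) (hρ : 0 < ρ) (hL : 0 < L) (hμ : 0 < μ) (N : ℕ) (hN : 2 ≤ N) :
    ∃ p ∈ feasible μ L, IsMaxOn (capUB ρ L μ N) (feasible μ L) p := by
  have hc : IsCompact (feasible μ L) := by
    have hcl : IsClosed (feasible μ L) := by
      have h1 : IsClosed {p : ℝ × ℝ | 0 ≤ p.1} := isClosed_le (by fun_prop) (by fun_prop)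
      have h2 : IsClosed {p : ℝ × ℝ | 0 ≤ p.2} := isClosed_le (by fun_prop) (by fun_prop)
      have h3 : IsClosed {p : ℝ × ℝ | p.1 + μ * p.2 ≤ L} := isClosed_le (by fun_prop) (by fun_prop)
      exact h1.inter (h2.inter h3)
    refine IsCompact.of_isClosed_subset (isCompact_Icc (a := ((0:ℝ), (0:ℝ))) (b := (L, L / μ))) hcl ?_
    rintro ⟨a, b⟩ ⟨h1, h2, h3⟩
    simp only at h1 h2 h3
    have h4 : 0 ≤ μ * b := by positivity
    refine ⟨⟨h1, h2⟩, ⟨?_, ?_⟩⟩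
    · show a ≤ L
      linarith
    · show b ≤ L / μ
      rw [le_div_iff₀ hμ]; linarith
  refine hc.exists_isMaxOn ⟨(0, 0), by simp [feasible, hL.le]⟩ ?_
  have hN' : (2:ℝ) ≤ N := by exact_mod_cast hN
  have hA : Continuous fun p : ℝ × ℝ => auxArg ρ N p.1 p.2 := by
    unfold auxArg
    have h1 : Continuous fun p : ℝ × ℝ => sigmaW2 ρ p.1 := (aux_sigma_cont ρ hρ).comp continuous_fst
    have h2 : Continuous fun p : ℝ × ℝ => (2:ℝ) ^ (-p.2) :=
      Continuous.rpow continuous_const (by fun_prop) (fun _ => Or.inl two_ne_zero)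
    have h3 : Continuous fun p : ℝ × ℝ => (2:ℝ) ^ (-(p.2 * (N:ℝ))) :=
      Continuous.rpow continuous_const (by fun_prop) (fun _ => Or.inl two_ne_zero)
    fun_prop
  have : ContinuousOn (fun p : ℝ × ℝ => ((L - p.1 - μ * p.2) / L) * Real.log (auxArg ρ N p.1 p.2))
      (feasible μ L) := by
    apply ContinuousOn.mul (by fun_prop)
    apply hA.continuousOn.log
    rintro p ⟨h1, h2, h3⟩
    have := aux_arg_ge_one ρ N p.1 p.2 hρ hN' h1 h2
    linarith
  exact this

/-- Asymptotics of the optimized capacity upper bound (proof of Theorem 2): `F_{N_t}`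
attains a maximum on the feasible set, any maximizers `(T̄°, B̄°)` satisfy
`T̄°·log N_t → L̄` and `B̄°·log N_t → L̄/μ`, and the maximum value `M(N_t)` satisfies
`M(N_t) − log(ρ N_t) + 2 log log N_t → log(L̄² log 2) − log(μ(1 + ρ⁻¹)) − 2`. -/
theorem optimized_capacity_upper_bound_asymptotics
    (ρ L μ : ℝ) (hρ : 0 < ρ) (hL : 0 < L) (hμ : 0 < μ) :
    (∀ Nt : ℕ, 2 ≤ Nt → ∃ p ∈ feasible μ L, IsMaxOn (capUB ρ L μ Nt) (feasible μ L) p) ∧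
    (∀ sel : ℕ → ℝ × ℝ,
      (∀ Nt : ℕ, 2 ≤ Nt →
        sel Nt ∈ feasible μ L ∧ IsMaxOn (capUB ρ L μ Nt) (feasible μ L) (sel Nt)) →
      Tendsto (fun Nt : ℕ => (sel Nt).1 * Real.log (Nt : ℝ)) atTop (nhds L) ∧
      Tendsto (fun Nt : ℕ => (sel Nt).2 * Real.log (Nt : ℝ)) atTop (nhds (L / μ)) ∧
      Tendsto (fun Nt : ℕ =>
          capUB ρ L μ Nt (sel Nt) - Real.log (ρ * (Nt : ℝ))
            + 2 * Real.log (Real.log (Nt : ℝ)))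
        atTop
        (nhds (Real.log (L ^ 2 * Real.log 2) - Real.log (μ * (1 + ρ⁻¹)) - 2))) := by
  refine ⟨fun N hN => aux_exists ρ L μ hρ hL hμ N hN, ?_⟩
  intro sel hsel
  have hl2 := Real.log_pos one_lt_two
  have hi : 0 < ρ⁻¹ := inv_pos.2 hρ
  set K : ℝ := ρ * (L ^ 2 * Real.log 2 / (μ * (1 + ρ⁻¹))) with hK
  have hK0 : 0 < K := by positivity
  set n : ℕ → ℝ := fun N => Real.log (N : ℝ) with hn_def
  have hn : Tendsto n atTop atTop := Real.tendsto_log_atTop.comp tendsto_natCast_atTop_atTop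
  have hninv : Tendsto (fun k => (n k)⁻¹) atTop (nhds 0) := hn.inv_tendsto_atTop
  set C : ℝ := 1 + 5 * ρ with hC
  have hC0 : 0 < C := by positivity
  set δ : ℕ → ℝ := fun N => C / K * ((n N) ^ 2 / (N : ℝ)) with hδ_def
  set ε : ℕ → ℝ := fun N => (2 * Real.log (n N) - Real.log K) / n N with hε_def
  set r : ℕ → ℝ := fun N => -2 + 2 * ε N
    - (1 - 2 * (n N)⁻¹) * (L / μ * (n N)⁻¹ * Real.log 2) with hr_def
  set u : ℕ → ℝ := fun N => (sel N).1 * n N / L with hu_def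
  set v : ℕ → ℝ := fun N => (sel N).2 * n N * μ / L with hv_def
  set g : ℕ → ℝ := fun N => capUB ρ L μ N (sel N) - n N + 2 * Real.log (n N) - Real.log K with hg_def
  have hδ : Tendsto δ atTop (nhds 0) := by
    have h1 : Tendsto (fun x : ℝ => Real.log x ^ 2 / x) atTop (nhds 0) := by
      simpa using (isLittleO_pow_log_id_atTop (n := 2)).tendsto_div_nhds_zero
    have h2 := (h1.comp tendsto_natCast_atTop_atTop).const_mul (C / K)
    simpa using h2
  have hε : Tendsto ε atTop (nhds 0) := by
    have h1 : Tendsto (fun x : ℝ => Real.log x / x) atTop (nhds 0) := by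
      simpa using Real.isLittleO_log_id_atTop.tendsto_div_nhds_zero
    have h2 := ((h1.comp hn).const_mul 2).sub (hninv.const_mul (Real.log K))
    simp only [mul_zero, sub_zero] at h2
    refine h2.congr fun k => ?_
    simp only [Function.comp, hε_def]; ring
  have hr : Tendsto r atTop (nhds (-2)) := by
    have h1 := ((hε.const_mul 2).const_add (-2)).sub
      (((hninv.const_mul 2).const_sub 1).mul ((hninv.const_mul (L / μ)).mul_const (Real.log 2)))
    simpa using h1
  have hn0 : ∀ᶠ k in atTop, 0 < n k := hn.eventually_gt_atTop 0
  have hN2 : ∀ᶠ k : ℕ in atTop, 2 ≤ k := eventually_ge_atTop 2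
  have key : Tendsto u atTop (nhds 1) ∧ Tendsto v atTop (nhds 1) ∧ Tendsto g atTop (nhds (-2)) := by
    refine aux_abstract g u v n δ ε r hn hδ hε hr ?_ ?_ ?_ ?_ ?_ ?_
    · filter_upwards [hn0, hN2] with k h1 h2
      have : (0:ℝ) < k := by exact_mod_cast (by omega : 0 < k)
      simp only [hδ_def]; positivity
    · filter_upwards [hn0, hN2] with k h1 h2
      have := (hsel k h2).1.1
      simp only [hu_def]; positivity
    · filter_upwards [hn0, hN2] with k h1 h2
      have := (hsel k h2).1.2.1
      simp only [hv_def]; positivity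
    · filter_upwards [hn0, hN2] with k h1 h2
      have := (hsel k h2).1.2.2
      simp only [hu_def, hv_def]
      rw [← add_div, div_le_iff₀ hL]
      nlinarith
    · filter_upwards [hn.eventually_gt_atTop L, hn.eventually_ge_atTop 2, hN2] with k h1 h2 h3
      have hk : (2:ℝ) ≤ k := by exact_mod_cast h3
      have hk0 : (0:ℝ) < k := by linarith
      have hnk : 0 < n k := by linarith
      set T : ℝ := L / n k with hT
      set B : ℝ := L / (μ * n k) with hB
      have hT0 : 0 < T := by positivity
      have hB0 : 0 < B := by positivity
      have hT1 : T < 1 := by rw [hT, div_lt_one hnk]; exact h1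
      have hμB : μ * B = T := by rw [hB, hT]; field_simp
      have hT2 : T + T ≤ L := by
        rw [hT, ← add_div, div_le_iff₀ hnk]; nlinarith
      have hmem : (T, B) ∈ feasible μ L := ⟨hT0.le, hB0.le, by simp only; linarith⟩
      have hmax : capUB ρ L μ k (T, B) ≤ capUB ρ L μ k (sel k) := (hsel k h3).2 hmem
      have hsT : 1 - sigmaW2 ρ T = T / (1 + ρ⁻¹) := by
        unfold sigmaW2; rw [if_pos hT1]; ring
      have hlow := aux_arg_lower ρ k T B hρ hk hT0.le hB0.le
      rw [hsT] at hlow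
      have hX : ρ * (T / (1 + ρ⁻¹)) * k * (B * Real.log 2 * (2:ℝ) ^ (-B))
          = K * k / (n k) ^ 2 * (2:ℝ) ^ (-B) := by
        rw [hK, hT, hB]; field_simp
      rw [hX] at hlow
      have hpos : 0 < K * k / (n k) ^ 2 * (2:ℝ) ^ (-B) := by positivity
      have hlog : Real.log K + n k - 2 * Real.log (n k) - B * Real.log 2
          ≤ Real.log (auxArg ρ k T B) := by
        have h4 : Real.log (K * k / (n k) ^ 2 * (2:ℝ) ^ (-B)) =
            Real.log K + n k - 2 * Real.log (n k) - B * Real.log 2 := by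
          rw [Real.log_mul (by positivity) (by positivity), Real.log_div (by positivity)
            (by positivity), Real.log_mul hK0.ne' hk0.ne', Real.log_pow, Real.log_rpow two_pos]
          push_cast
          simp only [hn_def]; ring
        rw [← h4]
        exact Real.log_le_log hpos (by linarith)
      rw [aux_capUB ρ L μ k (T, B)] at hmax
      simp only at hmax
      have hw : (L - T - μ * B) / L = 1 - 2 * (n k)⁻¹ := by
        rw [hμB, hT]; field_simp; ring
      rw [hw] at hmax
      have hw0 : 0 ≤ 1 - 2 * (n k)⁻¹ := by
        rw [sub_nonneg, ← div_eq_mul_inv, div_le_one hnk]; exact h2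
      have h5 := mul_le_mul_of_nonneg_left hlog hw0
      have hB' : L / μ * (n k)⁻¹ = B := by rw [hB]; field_simp
      have h6 : r k = (1 - 2 * (n k)⁻¹) * (Real.log K + n k - 2 * Real.log (n k) - B * Real.log 2)
          - n k + 2 * Real.log (n k) - Real.log K := by
        simp only [hr_def, hε_def]
        rw [hB']
        field_simp
        ring
      rw [h6]
      simp only [hg_def]
      linarith
    · filter_upwards [hn0, hN2] with k hnk h3
      have hk : (2:ℝ) ≤ k := by exact_mod_cast h3
      have hk0 : (0:ℝ) < k := by linarith
      obtain ⟨⟨hT0, hB0, hTB⟩, -⟩ := hsel k h3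
      have hup := aux_arg_upper ρ k (sel k).1 (sel k).2 hρ hk hT0 hB0
      have hone := aux_arg_ge_one ρ k (sel k).1 (sel k).2 hρ hk hT0 hB0
      have hu0 : 0 ≤ u k := by simp only [hu_def]; positivity
      have hv0 : 0 ≤ v k := by simp only [hv_def]; positivity
      have hδ0 : 0 < δ k := by simp only [hδ_def]; positivity
      have hX : C + ρ * ((sel k).1 / (1 + ρ⁻¹)) * k * ((sel k).2 * Real.log 2)
          = K * k / (n k) ^ 2 * (u k * v k + δ k) := by
        simp only [hδ_def, hu_def, hv_def]
        rw [mul_add, add_comm]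
        congr 1
        · rw [hK]; field_simp
        · field_simp
      rw [hX] at hup
      have hlog : Real.log (auxArg ρ k (sel k).1 (sel k).2) ≤
          Real.log K + n k - 2 * Real.log (n k) + Real.log (u k * v k + δ k) := by
        have h4 : Real.log (K * k / (n k) ^ 2 * (u k * v k + δ k)) =
            Real.log K + n k - 2 * Real.log (n k) + Real.log (u k * v k + δ k) := by
          rw [Real.log_mul (by positivity) (by positivity), Real.log_div (by positivity)
            (by positivity), Real.log_mul hK0.ne' hk0.ne', Real.log_pow]
          push_cast
          simp only [hn_def]
        rw [← h4]
        exact Real.log_le_log (by linarith) hup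
      have hw : (L - (sel k).1 - μ * (sel k).2) / L = 1 - (u k + v k) / n k := by
        simp only [hu_def, hv_def]; field_simp; ring
      have hw0 : 0 ≤ (L - (sel k).1 - μ * (sel k).2) / L :=
        div_nonneg (by linarith) hL.le
      have hcap := aux_capUB ρ L μ k (sel k)
      rw [hw] at hw0 hcap
      have h5 := mul_le_mul_of_nonneg_left hlog hw0
      rw [← hcap] at h5
      have h6 : (1 - (u k + v k) / n k) *
            (Real.log K + n k - 2 * Real.log (n k) + Real.log (u k * v k + δ k))
          - n k + 2 * Real.log (n k) - Real.log K
          = -(u k + v k) + ε k * (u k + v k)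
            + (1 - (u k + v k) / n k) * Real.log (u k * v k + δ k) := by
        generalize Real.log (u k * v k + δ k) = l
        simp only [hε_def]
        field_simp
        ring
      rw [← h6]
      simp only [hg_def]
      linarith
  obtain ⟨ku, kv, kg⟩ := key
  refine ⟨?_, ?_, ?_⟩
  · have := ku.const_mul L
    rw [mul_one] at this
    refine this.congr fun k => ?_
    simp only [hu_def, hn_def]; field_simp
  · have := kv.const_mul (L / μ)
    rw [mul_one] at this
    refine this.congr fun k => ?_
    simp only [hv_def, hn_def]; field_simp
  · have hKlog : Real.log K = Real.log ρ + (Real.log (L ^ 2 * Real.log 2)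
        - Real.log (μ * (1 + ρ⁻¹))) := by
      rw [hK, Real.log_mul hρ.ne' (by positivity), Real.log_div (by positivity) (by positivity)]
    have h1 := kg.add_const (Real.log K - Real.log ρ)
    have h2 : -2 + (Real.log K - Real.log ρ) =
        Real.log (L ^ 2 * Real.log 2) - Real.log (μ * (1 + ρ⁻¹)) - 2 := by rw [hKlog]; ring
    rw [h2] at h1
    refine h1.congr' ?_
    filter_upwards [hN2] with k hk
    have hk0 : (k:ℝ) ≠ 0 := by exact_mod_cast (by omega : k ≠ 0)
    rw [Real.log_mul hρ.ne' hk0]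
    simp only [hg_def, hn_def]; ring
end

section
/- Asymptotics of the optimized capacity lower bound (proof of Theorem 2): Fix reals ρ > 0, L̄ > 0, μ > 0. For each integer N_t ≥ 2 define on the compact set K = {(T̄, B̄) : T̄ ≥ 0, B̄ ≥ 0, T̄ + μ·B̄ ≤ L̄} the function G_{N_t}(T̄, B̄) = ((L̄ − T̄ − μ·B̄)/L̄)·(1 − d(N_t, B̄))·log(1 + ρ·((1 − σ_w²(T̄))/(1 + ρ·σ_w²(T̄)))·(1 − 2^{−B̄})·N_t), where σ_w²(T̄) = 1 − T̄/(1 + ρ^{−1}) if T̄ < 1 and σ_w²(T̄) = 1/(1 + ρ·T̄) if T̄ ≥ 1, and d(N_t, B̄) = (1/2)·√( 1/N_t + (1 + 1/N_t)·(Γ(1 + 2/(N_t−1)) − Γ(1 + 1/(N_t−1))²·(1 + 2^{−B̄·N_t})^{−2/(N_t−1)}) / (2^{B̄ + B̄/(N_t−1)} − Γ(1 + 1/(N_t−1)))² ). Then G_{N_t} attains a maximum on K, any choice of maximizers (T̄°(N_t), B̄°(N_t)) satisfies T̄°(N_t)·log N_t → L̄ and B̄°(N_t)·log N_t → L̄/μ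 as N_t → ∞, and the maximum value M(N_t) satisfies M(N_t) − log(ρ·N_t) + 2·log log N_t → log(L̄²·log 2) − log(μ·(1 + ρ^{−1})) − 2 − log(1 + ρ). -/
open Filter Real

/-- The deficiency term `d(N_t, B̄)` of Lemma 2 (eq. (28) of the paper). -/
noncomputable def dTerm (Nt : ℕ) (Bbar : ℝ) : ℝ :=
  (1 / 2) * Real.sqrt (1 / (Nt : ℝ) + (1 + 1 / (Nt : ℝ)) *
    (Real.Gamma (1 + 2 / ((Nt : ℝ) - 1)) -
        (Real.Gamma (1 + 1 / ((Nt : ℝ) - 1))) ^ 2 *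
          (1 + (2:ℝ) ^ (-(Bbar * (Nt : ℝ)))) ^ (-(2 / ((Nt : ℝ) - 1)))) /
    ((2:ℝ) ^ (Bbar + Bbar / ((Nt : ℝ) - 1)) - Real.Gamma (1 + 1 / ((Nt : ℝ) - 1))) ^ 2)

/-- The normalized lower bound `G_{N_t}(T̄, B̄)` on MISO beamforming capacity with
normalized training `T̄`, normalized feedback `B̄`, coherence time `L̄`, conversion factor `μ`,
and SNR `ρ` (Theorem 1 of the paper combined with the MMSE estimation error formula). -/
noncomputable def capLB (ρ L μ : ℝ) (Nt : ℕ) (p : ℝ × ℝ) : ℝ :=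
  ((L - p.1 - μ * p.2) / L) * (1 - dTerm Nt p.2) *
    Real.log (1 + ρ * ((1 - sigmaW2 ρ p.1) / (1 + ρ * sigmaW2 ρ p.1)) *
      (1 - (2:ℝ) ^ (-p.2)) * (Nt : ℝ))

noncomputable def fT (ρ T : ℝ) : ℝ := (1 - sigmaW2 ρ T) / (1 + ρ * sigmaW2 ρ T)

noncomputable def qq (ρ : ℝ) (N : ℕ) (p : ℝ × ℝ) : ℝ :=
  Real.log N ^ 2 / N + ρ * fT ρ p.1 * (1 - (2:ℝ) ^ (-p.2)) * Real.log N ^ 2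

noncomputable def AA (ρ L μ : ℝ) (N : ℕ) (p : ℝ × ℝ) : ℝ :=
  ((L - p.1 - μ * p.2) / L) * Real.log (1 + ρ * fT ρ p.1 * (1 - (2:ℝ) ^ (-p.2)) * N)
    - Real.log N + 2 * Real.log (Real.log N)

lemma sigma_eq (ρ T : ℝ) (hρ : 0 < ρ) : sigmaW2 ρ T =
    (1 - min T 1 / (1 + ρ⁻¹)) + (1 / (1 + ρ * max T 1)) - 1 / (1 + ρ) := by
  unfold sigmaW2
  split_ifs with h
  · rw [min_eq_left h.le, max_eq_right h.le]; simp
  · push Not at h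
    rw [min_eq_right h, max_eq_left h]
    have : 1 - 1 / (1 + ρ⁻¹) = 1 / (1 + ρ) := by field_simp; ring
    rw [this]; ring

lemma sigma_bounds (ρ T : ℝ) (hρ : 0 < ρ) (hT : 0 ≤ T) :
    0 ≤ sigmaW2 ρ T ∧ sigmaW2 ρ T ≤ 1 ∧ 1 - sigmaW2 ρ T ≤ ρ * T := by
  unfold sigmaW2
  have hi : 0 < ρ⁻¹ := inv_pos.2 hρ
  split_ifs with h
  · have h1 : T / (1 + ρ⁻¹) ≤ T := div_le_self hT (by linarith)
    have h2 : 0 ≤ T / (1 + ρ⁻¹) := by positivity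
    refine ⟨by linarith, by linarith, ?_⟩
    have : T / (1 + ρ⁻¹) ≤ ρ * T := by
      rw [div_le_iff₀ (by positivity)]
      have : ρ * T * (1 + ρ⁻¹) = ρ * T + T := by field_simp
      nlinarith [mul_nonneg hρ.le hT]
    linarith
  · have h0 : 0 ≤ ρ * T := mul_nonneg hρ.le hT
    refine ⟨by positivity, ?_, ?_⟩
    · rw [div_le_one (by positivity)]; linarith
    · have : 1 - 1 / (1 + ρ * T) = ρ * T / (1 + ρ * T) := by field_simp; ring
      rw [this]; exact div_le_self h0 (by linarith)

lemma fT_bounds (ρ T : ℝ) (hρ : 0 < ρ) (hT : 0 ≤ T) : 0 ≤ fT ρ T ∧ fT ρ T ≤ ρ * T := by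
  obtain ⟨h1, h2, h3⟩ := sigma_bounds ρ T hρ hT
  have h4 : 0 ≤ ρ * sigmaW2 ρ T := mul_nonneg hρ.le h1
  unfold fT
  refine ⟨div_nonneg (by linarith) (by linarith), ?_⟩
  exact (div_le_self (by linarith) (by linarith)).trans h3

lemma pow_bounds (B : ℝ) : B * Real.log 2 * (2:ℝ) ^ (-B) ≤ 1 - (2:ℝ) ^ (-B) ∧
    1 - (2:ℝ) ^ (-B) ≤ B * Real.log 2 := by
  rw [Real.rpow_def_of_pos (by norm_num)]
  have h1 := Real.add_one_le_exp (Real.log 2 * -B)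
  have h2 := Real.add_one_le_exp (Real.log 2 * B)
  constructor
  · have h3 : Real.exp (Real.log 2 * -B) * Real.exp (Real.log 2 * B) = 1 := by
      rw [← Real.exp_add]; simp
    have := mul_le_mul_of_nonneg_left h2 (Real.exp_pos (Real.log 2 * -B)).le
    nlinarith
  · linarith

lemma pow_nonneg' (B : ℝ) (hB : 0 ≤ B) : 0 ≤ 1 - (2:ℝ) ^ (-B) := by
  refine le_trans ?_ (pow_bounds B).1
  have := Real.log_pos (by norm_num : (1:ℝ) < 2)
  positivity

lemma tendsto_ell : Tendsto (fun N : ℕ => Real.log (N : ℝ)) atTop atTop :=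
  Real.tendsto_log_atTop.comp tendsto_natCast_atTop_atTop

lemma tendsto_ellpow (k : ℕ) : Tendsto (fun N : ℕ => Real.log (N : ℝ) ^ k / N) atTop (nhds 0) := by
  have := (Real.tendsto_pow_log_div_mul_add_atTop 1 0 k one_ne_zero).comp
    (tendsto_natCast_atTop_atTop (R := ℝ))
  simpa [Function.comp_def] using this

lemma tendsto_ellpow' (k : ℕ) :
    Tendsto (fun N : ℕ => Real.log (N : ℝ) ^ k / ((N : ℝ) - 1)) atTop (nhds 0) := by
  have := (Real.tendsto_pow_log_div_mul_add_atTop 1 (-1) k one_ne_zero).comp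
    (tendsto_natCast_atTop_atTop (R := ℝ))
  simpa [Function.comp_def, sub_eq_add_neg] using this

lemma tendsto_loglog :
    Tendsto (fun N : ℕ => Real.log (Real.log (N : ℝ)) / Real.log N) atTop (nhds 0) := by
  have := (Real.tendsto_pow_log_div_mul_add_atTop 1 0 1 one_ne_zero).comp tendsto_ell
  simpa [Function.comp_def] using this

lemma qq_tendsto (ρ : ℝ) (hρ : 0 < ρ) (F : Filter ℕ) (hF : F ≤ atTop) (p : ℕ → ℝ × ℝ) (t b : ℝ)
    (ht : Tendsto (fun N => (p N).1 * Real.log N) F (nhds t))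
    (hb : Tendsto (fun N => (p N).2 * Real.log N) F (nhds b)) :
    Tendsto (fun N => qq ρ N (p N)) F
      (nhds (ρ * Real.log 2 / ((1 + ρ⁻¹) * (1 + ρ)) * (t * b))) := by
  have hl := tendsto_ell.mono_left hF
  have hl0 : ∀ᶠ N : ℕ in F, 0 < Real.log (N : ℝ) := hl.eventually_gt_atTop 0
  have hinv : Tendsto (fun N : ℕ => (Real.log (N : ℝ))⁻¹) F (nhds 0) := tendsto_inv_atTop_zero.comp hl
  have hT : Tendsto (fun N => (p N).1) F (nhds 0) := by
    have := ht.mul hinv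
    rw [mul_zero] at this
    refine this.congr' ?_
    filter_upwards [hl0] with N hN
    field_simp
  have hB : Tendsto (fun N => (p N).2) F (nhds 0) := by
    have := hb.mul hinv
    rw [mul_zero] at this
    refine this.congr' ?_
    filter_upwards [hl0] with N hN
    field_simp
  have hi : 0 < ρ⁻¹ := inv_pos.2 hρ
  have hf : Tendsto (fun N => fT ρ (p N).1 * Real.log N) F (nhds ((t / (1 + ρ⁻¹)) / (1 + ρ))) := by
    have h1 : Tendsto (fun N => ((p N).1 * Real.log N / (1 + ρ⁻¹)) /
        (1 + ρ * (1 - (p N).1 / (1 + ρ⁻¹)))) F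
        (nhds ((t / (1 + ρ⁻¹)) / (1 + ρ * (1 - 0 / (1 + ρ⁻¹))))) := by
      refine (ht.div_const _).div ?_ ?_
      · exact tendsto_const_nhds.add (tendsto_const_nhds.mul (tendsto_const_nhds.sub (hT.div_const _)))
      · simp; positivity
    simp only [zero_div, sub_zero, mul_one] at h1
    refine h1.congr' ?_
    filter_upwards [hT.eventually_lt_const one_pos] with N hN
    unfold fT sigmaW2
    rw [if_pos hN]
    ring
  have h2 : Tendsto (fun N => (2:ℝ) ^ (-(p N).2)) F (nhds 1) := by
    have : ContinuousAt (fun x : ℝ => (2:ℝ) ^ x) 0 := Real.continuousAt_const_rpow (by norm_num)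
    have h := this.tendsto.comp (by simpa using hB.neg : Tendsto (fun N => -(p N).2) F (nhds 0))
    simpa [Function.comp_def] using h
  have hg : Tendsto (fun N => (1 - (2:ℝ) ^ (-(p N).2)) * Real.log N) F (nhds (b * Real.log 2)) := by
    have hu := hb.mul_const (Real.log 2)
    have hlo := hu.mul h2
    rw [mul_one] at hlo
    refine tendsto_of_tendsto_of_tendsto_of_le_of_le' hlo hu ?_ ?_
    · filter_upwards [hl0] with N hN
      have := mul_le_mul_of_nonneg_right (pow_bounds (p N).2).1 hN.le
      linarith
    · filter_upwards [hl0] with N hN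
      have := mul_le_mul_of_nonneg_right (pow_bounds (p N).2).2 hN.le
      linarith
  have := ((tendsto_ellpow 2).mono_left hF).add ((hf.const_mul ρ).mul hg)
  unfold qq
  convert this using 2
  · ring
  · field_simp; ring

lemma AA_eq (ρ L μ : ℝ) (hρ : 0 < ρ) (hL : 0 < L) (N : ℕ) (hN : 0 < Real.log (N : ℝ)) (p : ℝ × ℝ)
    (h1 : 0 ≤ p.1) (h2 : 0 ≤ p.2) :
    0 < qq ρ N p ∧
    AA ρ L μ N p = -((p.1 * Real.log N + μ * (p.2 * Real.log N)) / L)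
      * (1 - 2 * (Real.log (Real.log N) / Real.log N))
      + (1 - (p.1 + μ * p.2) / L) * Real.log (qq ρ N p) := by
  have hN0 : (0:ℝ) < N := by
    rcases Nat.eq_zero_or_pos N with h | h
    · subst h; simp at hN
    · exact_mod_cast h
  have hz : 0 ≤ ρ * fT ρ p.1 * (1 - (2:ℝ) ^ (-p.2)) :=
    mul_nonneg (mul_nonneg hρ.le (fT_bounds ρ p.1 hρ h1).1) (pow_nonneg' _ h2)
  have hq : 0 < qq ρ N p := by unfold qq; positivity
  refine ⟨hq, ?_⟩
  have hlog : Real.log (1 + ρ * fT ρ p.1 * (1 - (2:ℝ) ^ (-p.2)) * N) =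
      Real.log N - 2 * Real.log (Real.log N) + Real.log (qq ρ N p) := by
    have : 1 + ρ * fT ρ p.1 * (1 - (2:ℝ) ^ (-p.2)) * N = N / Real.log N ^ 2 * qq ρ N p := by
      unfold qq; field_simp
    rw [this, Real.log_mul (by positivity) hq.ne', Real.log_div (by positivity) (by positivity),
      Real.log_pow]
    norm_num
  unfold AA
  rw [hlog]
  field_simp
  ring

lemma AA_tendsto (ρ L μ : ℝ) (hρ : 0 < ρ) (hL : 0 < L)
    (F : Filter ℕ) (hF : F ≤ atTop) (p : ℕ → ℝ × ℝ) (t b : ℝ)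
    (hp : ∀ᶠ N in F, 0 ≤ (p N).1 ∧ 0 ≤ (p N).2)
    (ht : Tendsto (fun N => (p N).1 * Real.log N) F (nhds t))
    (hb : Tendsto (fun N => (p N).2 * Real.log N) F (nhds b)) :
    (0 < t * b → Tendsto (fun N => AA ρ L μ N (p N)) F
      (nhds (-((t + μ * b) / L) + Real.log (ρ * Real.log 2 / ((1 + ρ⁻¹) * (1 + ρ)) * (t * b))))) ∧
    (t * b = 0 → Tendsto (fun N => AA ρ L μ N (p N)) F atBot) := by
  have hl := tendsto_ell.mono_left hF
  have hl0 : ∀ᶠ N : ℕ in F, 0 < Real.log (N : ℝ) := hl.eventually_gt_atTop 0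
  have hinv : Tendsto (fun N : ℕ => (Real.log (N : ℝ))⁻¹) F (nhds 0) := tendsto_inv_atTop_zero.comp hl
  have hq := qq_tendsto ρ hρ F hF p t b ht hb
  have hs : Tendsto (fun N => ((p N).1 * Real.log N + μ * ((p N).2 * Real.log N)) / L) F
      (nhds ((t + μ * b) / L)) := (ht.add (hb.const_mul μ)).div_const L
  have hs1 : Tendsto (fun N => -(((p N).1 * Real.log N + μ * ((p N).2 * Real.log N)) / L)
      * (1 - 2 * (Real.log (Real.log N) / Real.log N))) F (nhds (-((t + μ * b) / L))) := by
    have := hs.neg.mul (((tendsto_loglog.mono_left hF).const_mul 2).const_sub 1)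
    simpa using this
  have hs2 : Tendsto (fun N => 1 - ((p N).1 + μ * (p N).2) / L) F (nhds 1) := by
    have := (hs.mul hinv).const_sub 1
    rw [mul_zero, sub_zero] at this
    refine this.congr' ?_
    filter_upwards [hl0] with N hN
    field_simp
  have heq : ∀ᶠ N in F, -(((p N).1 * Real.log N + μ * ((p N).2 * Real.log N)) / L)
      * (1 - 2 * (Real.log (Real.log N) / Real.log N))
      + (1 - ((p N).1 + μ * (p N).2) / L) * Real.log (qq ρ N (p N)) = AA ρ L μ N (p N) := by
    filter_upwards [hl0, hp] with N hN h
    exact (AA_eq ρ L μ hρ hL N hN (p N) h.1 h.2).2.symm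
  have hlog2 := Real.log_pos (by norm_num : (1:ℝ) < 2)
  constructor
  · intro htb
    refine Tendsto.congr' heq ?_
    have := hs1.add (hs2.mul (hq.log (by positivity)))
    simpa using this
  · intro htb
    refine Tendsto.congr' heq ?_
    rw [htb, mul_zero] at hq
    have hq' : Tendsto (fun N => qq ρ N (p N)) F (nhdsWithin 0 (Set.Ioi 0)) := by
      refine tendsto_nhdsWithin_iff.2 ⟨hq, ?_⟩
      filter_upwards [hl0, hp] with N hN h
      exact (AA_eq ρ L μ hρ hL N hN (p N) h.1 h.2).1
    have hlog := Real.tendsto_log_nhdsGT_zero.comp hq'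
    exact hs1.add_atBot (hs2.pos_mul_atBot one_pos hlog)

lemma log_bound (C s : ℝ) (hC : 0 ≤ C) (hs : 0 ≤ s) :
    Real.log (1 + C * s ^ 2) ≤ s / 4 + (2 * Real.log (8 * (C + 1)) + 1) := by
  have hK : 0 < C + 1 := by linarith
  have h1 : Real.log (1 + C * s ^ 2) ≤ Real.log ((1 + (C + 1) * s) ^ 2) := by
    apply Real.log_le_log (by positivity)
    nlinarith [mul_nonneg hC hs, sq_nonneg (C * s), mul_nonneg hC (sq_nonneg s), sq_nonneg s]
  rw [Real.log_pow] at h1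
  have h2 : Real.log (1 + (C + 1) * s) =
      Real.log ((1 + (C + 1) * s) / (8 * (C + 1))) + Real.log (8 * (C + 1)) := by
    rw [Real.log_div (by positivity) (by positivity)]; ring
  have h3 := Real.log_le_sub_one_of_pos (x := (1 + (C + 1) * s) / (8 * (C + 1))) (by positivity)
  have h4 : (1 + (C + 1) * s) / (8 * (C + 1)) = 1 / (8 * (C + 1)) + s / 8 := by field_simp
  have h5 : 1 / (8 * (C + 1)) ≤ 1 := by
    rw [div_le_one (by positivity)]; linarith
  push_cast at h1
  linarith

lemma s_bounded (ρ L μ : ℝ) (hρ : 0 < ρ) (hL : 0 < L) (hμ : 0 < μ) (c0 : ℝ) :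
    ∃ S : ℝ, ∀ᶠ N : ℕ in atTop, ∀ p ∈ feasible μ L, c0 ≤ AA ρ L μ N p →
      (p.1 * Real.log N + μ * (p.2 * Real.log N)) / L ≤ S := by
  set C : ℝ := ρ ^ 2 * Real.log 2 * L ^ 2 / μ with hCdef
  have hlog2 := Real.log_pos (by norm_num : (1:ℝ) < 2)
  have hC : 0 ≤ C := by positivity
  refine ⟨4 * ((2 * Real.log (8 * (C + 1)) + 1) - c0), ?_⟩
  filter_upwards [tendsto_ell.eventually_gt_atTop 0, (tendsto_ellpow 2).eventually_lt_const one_pos,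
    tendsto_loglog.eventually_lt_const (by norm_num : (0:ℝ) < 1/4)] with N hN h1 h2 p hp hA
  obtain ⟨p1, p2, p3⟩ := hp
  obtain ⟨hq, hE⟩ := AA_eq ρ L μ hρ hL N hN p p1 p2
  rw [hE] at hA
  set l := Real.log (N : ℝ)
  set s := (p.1 * l + μ * (p.2 * l)) / L with hs
  have hs0 : 0 ≤ s := by positivity
  have hw1 : 0 ≤ 1 - (p.1 + μ * p.2) / L := by
    rw [sub_nonneg, div_le_one hL]; exact p3
  have hw2 : 1 - (p.1 + μ * p.2) / L ≤ 1 := by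
    have : 0 ≤ (p.1 + μ * p.2) / L := by positivity
    linarith
  have hqle : qq ρ N p ≤ 1 + C * s ^ 2 := by
    unfold qq
    have ha : ρ * fT ρ p.1 * (1 - (2:ℝ) ^ (-p.2)) * l ^ 2 ≤
        ρ * (ρ * p.1) * (p.2 * Real.log 2) * l ^ 2 := by
      have hf := fT_bounds ρ p.1 hρ p1
      have hg := (pow_bounds p.2).2
      have hg0 := pow_nonneg' p.2 p2
      have := hf.1
      have := hf.2
      gcongr
    have hb : (p.1 * l) * (μ * (p.2 * l)) ≤ (L * s) ^ 2 := by
      have : L * s = p.1 * l + μ * (p.2 * l) := by rw [hs]; field_simp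
      rw [this]
      have u : 0 ≤ p.1 * l := by positivity
      have v : 0 ≤ μ * (p.2 * l) := by positivity
      nlinarith [mul_nonneg u v, sq_nonneg (p.1 * l), sq_nonneg (μ * (p.2 * l))]
    have hc : ρ * (ρ * p.1) * (p.2 * Real.log 2) * l ^ 2 =
        ρ ^ 2 * Real.log 2 / μ * ((p.1 * l) * (μ * (p.2 * l))) := by field_simp
    have hd : C * s ^ 2 = ρ ^ 2 * Real.log 2 / μ * (L * s) ^ 2 := by
      rw [hCdef]; ring
    rw [hc] at ha
    rw [hd]
    have := mul_le_mul_of_nonneg_left hb (by positivity : 0 ≤ ρ ^ 2 * Real.log 2 / μ)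
    linarith
  have hlq : Real.log (qq ρ N p) ≤ Real.log (1 + C * s ^ 2) := Real.log_le_log hq hqle
  have hlp : 0 ≤ Real.log (1 + C * s ^ 2) := Real.log_nonneg (by nlinarith [mul_nonneg hC (sq_nonneg s)])
  have hb := log_bound C s hC hs0
  have h3 : (1 - (p.1 + μ * p.2) / L) * Real.log (qq ρ N p) ≤ Real.log (1 + C * s ^ 2) := by
    calc _ ≤ (1 - (p.1 + μ * p.2) / L) * Real.log (1 + C * s ^ 2) :=
          mul_le_mul_of_nonneg_left hlq hw1
      _ ≤ 1 * _ := mul_le_mul_of_nonneg_right hw2 hlp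
      _ = _ := one_mul _
  have h4 : -s * (1 - 2 * (Real.log l / l)) ≤ - s / 2 := by nlinarith
  linarith

lemma Gamma_le_one (x : ℝ) (h0 : 0 ≤ x) (h1 : x ≤ 1) : Real.Gamma (1 + x) ≤ 1 := by
  have := Real.convexOn_Gamma.2 (Set.mem_Ioi.2 one_pos : (1:ℝ) ∈ Set.Ioi (0:ℝ))
    (Set.mem_Ioi.2 two_pos : (2:ℝ) ∈ Set.Ioi (0:ℝ))
    (by linarith : 0 ≤ 1 - x) h0 (by ring)
  simp only [smul_eq_mul, Real.Gamma_one, Real.Gamma_two] at this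
  have e : (1 - x) * 1 + x * 2 = 1 + x := by ring
  rw [e] at this
  linarith

lemma Gamma_sq_le (x : ℝ) (h0 : 0 ≤ x) : Real.Gamma (1 + x) ^ 2 ≤ Real.Gamma (1 + 2 * x) := by
  have := Real.Gamma_mul_add_mul_le_rpow_Gamma_mul_rpow_Gamma (s := 1) (t := 1 + 2 * x)
    (a := 1/2) (b := 1/2) (by norm_num) (by linarith) (by norm_num) (by norm_num) (by norm_num)
  have e : (1/2 : ℝ) * 1 + 1/2 * (1 + 2 * x) = 1 + x := by ring
  rw [e, Real.Gamma_one, Real.one_rpow, one_mul, ← Real.sqrt_eq_rpow] at this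
  have hp : 0 < Real.Gamma (1 + 2 * x) := Real.Gamma_pos_of_pos (by linarith)
  calc _ ≤ (Real.sqrt (Real.Gamma (1 + 2 * x))) ^ 2 := by
        have := (Real.Gamma_pos_of_pos (by linarith : 0 < 1 + x)).le
        gcongr
    _ = _ := Real.sq_sqrt hp.le

lemma dTerm_nonneg (N : ℕ) (B : ℝ) : 0 ≤ dTerm N B := by unfold dTerm; positivity

lemma capLB_eq (ρ L μ : ℝ) (N : ℕ) (p : ℝ × ℝ) : capLB ρ L μ N p - Real.log N
    + 2 * Real.log (Real.log N) = AA ρ L μ N p - dTerm N p.2 * (AA ρ L μ N p + Real.log N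
    - 2 * Real.log (Real.log N)) := by
  unfold capLB AA fT; ring

lemma wlog_nonneg (ρ L μ : ℝ) (hρ : 0 < ρ) (hL : 0 < L) (N : ℕ) (p : ℝ × ℝ)
    (hp : p ∈ feasible μ L) : 0 ≤ (L - p.1 - μ * p.2) / L ∧
    0 ≤ Real.log (1 + ρ * fT ρ p.1 * (1 - (2:ℝ) ^ (-p.2)) * N) := by
  obtain ⟨h1, h2, h3⟩ := hp
  have hz : 0 ≤ ρ * fT ρ p.1 * (1 - (2:ℝ) ^ (-p.2)) :=
    mul_nonneg (mul_nonneg hρ.le (fT_bounds ρ p.1 hρ h1).1) (pow_nonneg' _ h2)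
  exact ⟨div_nonneg (by linarith) hL.le,
    (Real.log_nonneg (by have := mul_nonneg hz (Nat.cast_nonneg (α := ℝ) N); linarith))⟩

lemma capLB_le (ρ L μ : ℝ) (hρ : 0 < ρ) (hL : 0 < L) (N : ℕ) (p : ℝ × ℝ)
    (hp : p ∈ feasible μ L) : capLB ρ L μ N p - Real.log N
    + 2 * Real.log (Real.log N) ≤ AA ρ L μ N p := by
  rw [capLB_eq]
  have h := wlog_nonneg ρ L μ hρ hL N p hp
  have : 0 ≤ AA ρ L μ N p + Real.log N - 2 * Real.log (Real.log N) := by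
    have := mul_nonneg h.1 h.2
    unfold AA; linarith
  have := mul_nonneg (dTerm_nonneg N p.2) this
  linarith

lemma two_mul_x (N : ℕ) : 2 / ((N:ℝ) - 1) = 2 * (1 / ((N:ℝ) - 1)) := by ring

lemma num_le (x y : ℝ) (hx : 0 ≤ x) (hy : 0 ≤ y) (hy1 : y ≤ 1) :
    Real.Gamma (1 + 2 * x) - Real.Gamma (1 + x) ^ 2 * (1 + y) ^ (-(2 * x)) ≤
    Real.Gamma (1 + 2 * x) - Real.Gamma (1 + x) ^ 2 * (2:ℝ) ^ (-(2 * x)) := by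
  have : (2:ℝ) ^ (-(2 * x)) ≤ (1 + y) ^ (-(2 * x)) :=
    Real.rpow_le_rpow_of_nonpos (by linarith) (by linarith) (by linarith)
  have := mul_le_mul_of_nonneg_left this (sq_nonneg (Real.Gamma (1 + x)))
  linarith

lemma psi_bigO : ∃ C : ℝ, 0 < C ∧ ∀ᶠ x : ℝ in nhds 0,
    Real.Gamma (1 + 2 * x) - Real.Gamma (1 + x) ^ 2 * (2:ℝ) ^ (-(2 * x)) ≤ C * |x| := by
  have hG : DifferentiableAt ℝ Real.Gamma 1 := by
    apply Real.differentiableAt_Gamma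
    intro m h
    have : (0:ℝ) ≤ m := Nat.cast_nonneg m
    linarith
  have hd : DifferentiableAt ℝ
      (fun x : ℝ => Real.Gamma (1 + 2 * x) - Real.Gamma (1 + x) ^ 2 * (2:ℝ) ^ (-(2 * x))) 0 := by
    have h1 : DifferentiableAt ℝ (fun x : ℝ => Real.Gamma (1 + 2 * x)) 0 := by
      apply DifferentiableAt.comp (g := Real.Gamma)
      · simpa using hG
      · fun_prop
    have h2 : DifferentiableAt ℝ (fun x : ℝ => Real.Gamma (1 + x)) 0 := by
      apply DifferentiableAt.comp (g := Real.Gamma)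
      · simpa using hG
      · fun_prop
    have h3 : DifferentiableAt ℝ (fun x : ℝ => (2:ℝ) ^ (-(2 * x))) 0 := by
      simp_rw [Real.rpow_def_of_pos (by norm_num : (0:ℝ) < 2)]
      fun_prop
    exact h1.sub ((h2.pow 2).mul h3)
  obtain ⟨C, hC, h⟩ := hd.hasDerivAt.isBigO_sub.exists_pos
  refine ⟨C, hC, ?_⟩
  filter_upwards [h.bound] with x hx
  simp at hx
  exact (le_abs_self _).trans hx

lemma d_small (c : ℝ) (hc : 0 < c) :
    Tendsto (fun N : ℕ => dTerm N (c / Real.log N) * Real.log N) atTop (nhds 0) := by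
  obtain ⟨C, hC, hpsi⟩ := psi_bigO
  have hlog2 := Real.log_pos (by norm_num : (1:ℝ) < 2)
  have hx : Tendsto (fun N : ℕ => 1 / ((N:ℝ) - 1)) atTop (nhds 0) := by
    simpa using tendsto_ellpow' 0
  have hup : Tendsto (fun N : ℕ => (1/2) * Real.sqrt (Real.log (N:ℝ) ^ 2 / N +
      2 * C / (c * Real.log 2) ^ 2 * (Real.log (N:ℝ) ^ 4 / ((N:ℝ) - 1)))) atTop (nhds 0) := by
    have := (((tendsto_ellpow 2).add ((tendsto_ellpow' 4).const_mul
      (2 * C / (c * Real.log 2) ^ 2))).sqrt).const_mul (1/2)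
    simpa using this
  refine tendsto_of_tendsto_of_tendsto_of_le_of_le' tendsto_const_nhds hup ?_ ?_
  · filter_upwards [tendsto_ell.eventually_gt_atTop 0] with N hN
    exact mul_nonneg (dTerm_nonneg _ _) hN.le
  · filter_upwards [tendsto_ell.eventually_gt_atTop 0, hx.eventually hpsi,
      eventually_ge_atTop 2] with N hN hps hN2
    have hN2' : (2:ℝ) ≤ N := by exact_mod_cast hN2
    set l := Real.log (N:ℝ)
    set B := c / l with hB
    have hB0 : 0 < B := by positivity
    unfold dTerm
    rw [two_mul_x]
    set x := 1 / ((N:ℝ) - 1) with hxdef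
    have hx0 : 0 < x := by apply div_pos one_pos; linarith
    have hx1 : x ≤ 1 := by rw [hxdef, div_le_one (by linarith)]; linarith
    rw [abs_of_pos hx0] at hps
    have hy1 : (2:ℝ) ^ (-(B * N)) ≤ 1 :=
      Real.rpow_le_one_of_one_le_of_nonpos (by norm_num) (by have : 0 ≤ B * N := by positivity
                                                             linarith)
    have hnum := (num_le x ((2:ℝ) ^ (-(B * N))) hx0.le (by positivity) hy1).trans hps
    have hden : B * Real.log 2 ≤ (2:ℝ) ^ (B + B / ((N:ℝ) - 1)) - Real.Gamma (1 + x) := by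
      have h1 := Gamma_le_one x hx0.le hx1
      have h2 : (2:ℝ) ^ B ≤ (2:ℝ) ^ (B + B / ((N:ℝ) - 1)) := by
        apply Real.rpow_le_rpow_of_exponent_le (by norm_num)
        have : 0 ≤ B / ((N:ℝ) - 1) := div_nonneg hB0.le (by linarith)
        linarith
      have h3 : B * Real.log 2 + 1 ≤ (2:ℝ) ^ B := by
        rw [Real.rpow_def_of_pos (by norm_num)]
        have := Real.add_one_le_exp (Real.log 2 * B)
        linarith
      linarith
    rw [mul_assoc, ← Real.sqrt_sq hN.le, ← Real.sqrt_mul' _ (sq_nonneg _), Real.sqrt_sq hN.le]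
    apply mul_le_mul_of_nonneg_left _ (by norm_num)
    apply Real.sqrt_le_sqrt
    have hBl : 0 < B * Real.log 2 := by positivity
    have hN1 : 1 + 1 / (N:ℝ) ≤ 2 := by
      have : 1 / (N:ℝ) ≤ 1 := by rw [div_le_one (by linarith)]; linarith
      linarith
    have key : (1 + 1 / (N:ℝ)) * (Real.Gamma (1 + 2 * x) - Real.Gamma (1 + x) ^ 2 *
        (1 + (2:ℝ) ^ (-(B * N))) ^ (-(2 * x))) /
        ((2:ℝ) ^ (B + B / ((N:ℝ) - 1)) - Real.Gamma (1 + x)) ^ 2 ≤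
        2 * (C * x) / (B * Real.log 2) ^ 2 := by
      have : (1 + 1 / (N:ℝ)) * (Real.Gamma (1 + 2 * x) - Real.Gamma (1 + x) ^ 2 *
        (1 + (2:ℝ) ^ (-(B * N))) ^ (-(2 * x))) ≤ 2 * (C * x) :=
        (mul_le_mul_of_nonneg_left hnum (by positivity)).trans
          (mul_le_mul_of_nonneg_right hN1 (by positivity))
      calc _ ≤ 2 * (C * x) / ((2:ℝ) ^ (B + B / ((N:ℝ) - 1)) - Real.Gamma (1 + x)) ^ 2 := by
            gcongr
        _ ≤ _ := by gcongr
    have e : 2 * C / (c * Real.log 2) ^ 2 * (l ^ 4 / ((N:ℝ) - 1)) =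
        2 * (C * x) / (B * Real.log 2) ^ 2 * l ^ 2 := by
      rw [hB, hxdef]; field_simp
    rw [e]
    have := mul_le_mul_of_nonneg_right key (sq_nonneg l)
    rw [add_mul]
    have e2 : 1 / (N:ℝ) * l ^ 2 = l ^ 2 / N := by ring
    rw [e2]
    linarith

lemma feasible_compact (L μ : ℝ) (hμ : 0 < μ) : IsCompact (feasible μ L) := by
  apply IsCompact.of_isClosed_subset (isCompact_Icc (a := ((0:ℝ), (0:ℝ))) (b := (L, L / μ)))
  · unfold feasible
    apply IsClosed.inter
    · exact isClosed_le continuous_const continuous_fst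
    · apply IsClosed.inter
      · exact isClosed_le continuous_const continuous_snd
      · exact isClosed_le (f := fun p : ℝ × ℝ => p.1 + μ * p.2) (by fun_prop) continuous_const
  · rintro ⟨a, b⟩ ⟨h1, h2, h3⟩
    simp only at h1 h2 h3
    refine ⟨⟨h1, h2⟩, ⟨?_, ?_⟩⟩
    · simp only; nlinarith [mul_nonneg hμ.le h2]
    · simp only; rw [le_div_iff₀ hμ]; linarith

lemma dTerm_contAt (N : ℕ) (B : ℝ)
    (h : (2:ℝ) ^ (B + B / ((N : ℝ) - 1)) - Real.Gamma (1 + 1 / ((N : ℝ) - 1)) ≠ 0) :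
    ContinuousAt (dTerm N) B := by
  unfold dTerm
  have hc : ∀ g : ℝ → ℝ, Continuous g → Continuous (fun B : ℝ => (2:ℝ) ^ (g B)) := fun g hg =>
    continuous_const.rpow hg (fun _ => Or.inl (by norm_num))
  apply ContinuousAt.mul continuousAt_const
  apply ContinuousAt.sqrt
  apply ContinuousAt.add continuousAt_const
  apply ContinuousAt.div
  · apply Continuous.continuousAt
    apply continuous_const.mul
    apply continuous_const.sub
    apply continuous_const.mul
    apply Continuous.rpow_const
    · exact continuous_const.add (hc _ (by fun_prop))
    · intro x; left; positivity
  · apply Continuous.continuousAt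
    exact ((hc _ (by fun_prop)).sub continuous_const).pow 2
  · exact pow_ne_zero 2 h

lemma capLB_contOn (ρ L μ : ℝ) (hρ : 0 < ρ) (N : ℕ) (K : Set (ℝ × ℝ))
    (hK : K ⊆ feasible μ L) (h : ∀ p ∈ K, ContinuousAt (dTerm N) p.2) :
    ContinuousOn (capLB ρ L μ N) K := by
  have hsig : Continuous (sigmaW2 ρ) := by
    have : sigmaW2 ρ = fun T => (1 - min T 1 / (1 + ρ⁻¹)) + (1 / (1 + ρ * max T 1)) - 1 / (1 + ρ) := by
      funext T; exact sigma_eq ρ T hρ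
    rw [this]
    apply Continuous.sub _ continuous_const
    apply Continuous.add
    · fun_prop
    · apply Continuous.div continuous_const (by fun_prop)
      intro x
      have : 0 < max x 1 := lt_max_of_lt_right one_pos
      positivity
  intro p hp
  apply ContinuousAt.continuousWithinAt
  obtain ⟨h1, h2, h3⟩ := hK hp
  unfold capLB
  have hs : ContinuousAt (fun p : ℝ × ℝ => sigmaW2 ρ p.1) p := by fun_prop
  have hd : ContinuousAt (fun p : ℝ × ℝ => dTerm N p.2) p :=
    ContinuousAt.comp (g := dTerm N) (h p hp) continuousAt_snd
  have h2p : ContinuousAt (fun p : ℝ × ℝ => (2:ℝ) ^ (-p.2)) p :=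
    (continuous_const.rpow (by fun_prop) (fun _ => Or.inl (by norm_num))).continuousAt
  have hb := sigma_bounds ρ p.1 hρ h1
  have hz : 0 ≤ ρ * fT ρ p.1 * (1 - (2:ℝ) ^ (-p.2)) :=
    mul_nonneg (mul_nonneg hρ.le (fT_bounds ρ p.1 hρ h1).1) (pow_nonneg' _ h2)
  have hz' := mul_nonneg hz (Nat.cast_nonneg (α := ℝ) N)
  unfold fT at hz'
  apply ContinuousAt.mul
  · exact ContinuousAt.mul (by fun_prop) (continuousAt_const.sub hd)
  · apply ContinuousAt.log
    · apply continuousAt_const.add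
      apply ContinuousAt.mul _ continuousAt_const
      apply ContinuousAt.mul _ (continuousAt_const.sub h2p)
      apply continuousAt_const.mul
      apply ContinuousAt.div (continuousAt_const.sub hs) (continuousAt_const.add (continuousAt_const.mul hs))
      have := mul_nonneg hρ.le hb.1
      change 1 + ρ * sigmaW2 ρ p.1 ≠ 0
      linarith
    · linarith

lemma den_pos (N : ℕ) (hN : 2 ≤ N) (B : ℝ) (hB : 0 < B) :
    0 < (2:ℝ) ^ (B + B / ((N : ℝ) - 1)) - Real.Gamma (1 + 1 / ((N : ℝ) - 1)) := by
  have hN2' : (2:ℝ) ≤ N := by exact_mod_cast hN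
  have h1 : Real.Gamma (1 + 1 / ((N : ℝ) - 1)) ≤ 1 := by
    apply Gamma_le_one
    · apply div_nonneg one_pos.le; linarith
    · rw [div_le_one (by linarith)]; linarith
  have : 1 < (2:ℝ) ^ (B + B / ((N : ℝ) - 1)) := by
    apply Real.one_lt_rpow (by norm_num)
    have : 0 ≤ B / ((N:ℝ) - 1) := div_nonneg hB.le (by linarith)
    linarith
  linarith

lemma d_big (N : ℕ) (hN : 2 ≤ N) (h : Real.Gamma (1 + 1 / ((N : ℝ) - 1)) = 1) :
    ∀ᶠ B in nhdsWithin (0:ℝ) (Set.Ioi 0), 1 ≤ dTerm N B := by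
  have hN2' : (2:ℝ) ≤ N := by exact_mod_cast hN
  have hc : ∀ g : ℝ → ℝ, Continuous g → Continuous (fun B : ℝ => (2:ℝ) ^ (g B)) := fun g hg =>
    continuous_const.rpow hg (fun _ => Or.inl (by norm_num))
  have hx0 : 0 < 1 / ((N:ℝ) - 1) := div_pos one_pos (by linarith)
  have hG2 := Gamma_sq_le (1 / ((N:ℝ) - 1)) hx0.le
  rw [h, ← two_mul_x] at hG2
  have hnum : Tendsto (fun B : ℝ => (1 + 1 / (N : ℝ)) *
    (Real.Gamma (1 + 2 / ((N : ℝ) - 1)) -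
        (Real.Gamma (1 + 1 / ((N : ℝ) - 1))) ^ 2 *
          (1 + (2:ℝ) ^ (-(B * (N : ℝ)))) ^ (-(2 / ((N : ℝ) - 1))))) (nhdsWithin (0:ℝ) (Set.Ioi 0))
      (nhds ((1 + 1 / (N : ℝ)) *
    (Real.Gamma (1 + 2 / ((N : ℝ) - 1)) -
        (Real.Gamma (1 + 1 / ((N : ℝ) - 1))) ^ 2 *
          (1 + (2:ℝ) ^ (-((0:ℝ) * (N : ℝ)))) ^ (-(2 / ((N : ℝ) - 1)))))) := by
    apply Tendsto.mono_left _ nhdsWithin_le_nhds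
    apply Continuous.tendsto (f := fun B : ℝ => (1 + 1 / (N : ℝ)) *
    (Real.Gamma (1 + 2 / ((N : ℝ) - 1)) -
        (Real.Gamma (1 + 1 / ((N : ℝ) - 1))) ^ 2 *
          (1 + (2:ℝ) ^ (-(B * (N : ℝ)))) ^ (-(2 / ((N : ℝ) - 1)))))
    apply continuous_const.mul
    apply continuous_const.sub
    apply continuous_const.mul
    apply Continuous.rpow_const
    · exact continuous_const.add (hc _ (by fun_prop))
    · intro x; left; positivity
  have hpos : 0 < (1 + 1 / (N : ℝ)) *
    (Real.Gamma (1 + 2 / ((N : ℝ) - 1)) -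
        (Real.Gamma (1 + 1 / ((N : ℝ) - 1))) ^ 2 *
          (1 + (2:ℝ) ^ (-((0:ℝ) * (N : ℝ)))) ^ (-(2 / ((N : ℝ) - 1)))) := by
    apply mul_pos (by positivity)
    rw [h, zero_mul, neg_zero, Real.rpow_zero]
    have : (1 + 1 : ℝ) ^ (-(2 / ((N : ℝ) - 1))) < 1 := by
      apply Real.rpow_lt_one_of_one_lt_of_neg (by norm_num)
      have : 0 < 2 / ((N:ℝ) - 1) := div_pos two_pos (by linarith)
      linarith
    linarith
  have hden : Tendsto (fun B : ℝ => ((2:ℝ) ^ (B + B / ((N : ℝ) - 1)) -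
      Real.Gamma (1 + 1 / ((N : ℝ) - 1))) ^ 2) (nhdsWithin (0:ℝ) (Set.Ioi 0))
      (nhdsWithin (0:ℝ) (Set.Ioi 0)) := by
    refine tendsto_nhdsWithin_iff.2 ⟨?_, ?_⟩
    · apply Tendsto.mono_left _ nhdsWithin_le_nhds
      have : Continuous (fun B : ℝ => ((2:ℝ) ^ (B + B / ((N : ℝ) - 1)) -
        Real.Gamma (1 + 1 / ((N : ℝ) - 1))) ^ 2) :=
        ((hc _ (by fun_prop)).sub continuous_const).pow 2
      have := this.tendsto 0
      simpa [h, -one_div] using this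
    · filter_upwards [self_mem_nhdsWithin] with B hB
      exact pow_pos (den_pos N hN B hB) 2
  have hinf := hnum.pos_mul_atTop hpos (tendsto_inv_nhdsGT_zero.comp hden)
  filter_upwards [hinf.eventually_ge_atTop 4] with B hB
  unfold dTerm
  simp only [Function.comp] at hB
  rw [← div_eq_mul_inv] at hB
  have h2 : (2:ℝ) = Real.sqrt 4 := by
    rw [show (4:ℝ) = 2 ^ 2 by norm_num, Real.sqrt_sq (by norm_num)]
  have h3 : (2:ℝ) ≤ Real.sqrt (1 / (N : ℝ) + (1 + 1 / (N : ℝ)) *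
    (Real.Gamma (1 + 2 / ((N : ℝ) - 1)) -
        (Real.Gamma (1 + 1 / ((N : ℝ) - 1))) ^ 2 *
          (1 + (2:ℝ) ^ (-(B * (N : ℝ)))) ^ (-(2 / ((N : ℝ) - 1)))) /
    ((2:ℝ) ^ (B + B / ((N : ℝ) - 1)) - Real.Gamma (1 + 1 / ((N : ℝ) - 1))) ^ 2) := by
    apply Real.le_sqrt_of_sq_le
    have : 0 ≤ 1 / (N:ℝ) := by positivity
    linarith
  linarith

lemma exists_max (ρ L μ : ℝ) (hρ : 0 < ρ) (hL : 0 < L) (hμ : 0 < μ) (N : ℕ) (hN : 2 ≤ N) :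
    ∃ p ∈ feasible μ L, IsMaxOn (capLB ρ L μ N) (feasible μ L) p := by
  have hN2' : (2:ℝ) ≤ N := by exact_mod_cast hN
  have hmem : ((0:ℝ), (0:ℝ)) ∈ feasible μ L := ⟨le_rfl, le_rfl, by simp [hL.le]⟩
  have hG1 : Real.Gamma (1 + 1 / ((N : ℝ) - 1)) ≤ 1 := by
    apply Gamma_le_one
    · apply div_nonneg one_pos.le; linarith
    · rw [div_le_one (by linarith)]; linarith
  rcases hG1.lt_or_eq with hlt | heq
  · apply (feasible_compact L μ hμ).exists_isMaxOn ⟨_, hmem⟩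
    apply capLB_contOn ρ L μ hρ N _ subset_rfl
    rintro p ⟨h1, h2, h3⟩
    apply dTerm_contAt
    rcases h2.lt_or_eq with h | h
    · exact (den_pos N hN _ h).ne'
    · rw [← h]; simp only [zero_div, add_zero, Real.rpow_zero]; linarith
  · obtain ⟨ε, hε, hd⟩ := mem_nhdsGT_iff_exists_Ioo_subset.1 (d_big N hN heq)
    rw [Set.mem_Ioi] at hε
    have h0 : capLB ρ L μ N (0, 0) = 0 := by simp [capLB]
    have hsmall : ∀ p ∈ feasible μ L, p.2 < ε → capLB ρ L μ N p ≤ 0 := by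
      intro p hp hpε
      have hw := wlog_nonneg ρ L μ hρ hL N p hp
      rcases hp.2.1.lt_or_eq with h | h
      · have h1 : 1 ≤ dTerm N p.2 := hd ⟨h, hpε⟩
        unfold capLB
        unfold fT at hw
        exact mul_nonpos_of_nonpos_of_nonneg
          (mul_nonpos_of_nonneg_of_nonpos hw.1 (by linarith)) hw.2
      · unfold capLB; rw [← h]; simp
    by_cases hall : ∀ p ∈ feasible μ L, capLB ρ L μ N p ≤ 0
    · refine ⟨_, hmem, fun p hp => ?_⟩
      simp only [Set.mem_ofPred_eq]
      rw [h0]; exact hall p hp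
    · push Not at hall
      obtain ⟨p0, hp0, hp0'⟩ := hall
      have hp0ε : ε ≤ p0.2 := by
        by_contra hcon
        push Not at hcon
        exact absurd (hsmall p0 hp0 hcon) (not_le.2 hp0')
      have hcl : IsClosed {p : ℝ × ℝ | ε ≤ p.2} := isClosed_le continuous_const continuous_snd
      obtain ⟨m, hm, hmax⟩ := ((feasible_compact L μ hμ).inter_right hcl).exists_isMaxOn
        (f := capLB ρ L μ N) ⟨p0, hp0, hp0ε⟩ (by
          apply capLB_contOn ρ L μ hρ N _ Set.inter_subset_left
          rintro p ⟨_, hp⟩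
          exact dTerm_contAt N _ (den_pos N hN _ (lt_of_lt_of_le hε hp)).ne')
      refine ⟨m, hm.1, fun p hp => ?_⟩
      simp only [Set.mem_ofPred_eq]
      rcases lt_or_ge p.2 ε with h | h
      · exact (hsmall p hp h).trans (hp0'.le.trans (hmax ⟨hp0, hp0ε⟩))
      · exact hmax ⟨hp, h⟩

/-- Asymptotics of the optimized capacity lower bound (proof of Theorem 2): `G_{N_t}`
attains a maximum on the feasible set, any maximizers `(T̄°, B̄°)` satisfy
`T̄°·log N_t → L̄` and `B̄°·log N_t → L̄/μ`, and the maximum value `M(N_t)` satisfies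
`M(N_t) − log(ρ N_t) + 2 log log N_t → log(L̄² log 2) − log(μ(1 + ρ⁻¹)) − 2 − log(1 + ρ)`. -/
theorem optimized_capacity_lower_bound_asymptotics
    (ρ L μ : ℝ) (hρ : 0 < ρ) (hL : 0 < L) (hμ : 0 < μ) :
    (∀ Nt : ℕ, 2 ≤ Nt → ∃ p ∈ feasible μ L, IsMaxOn (capLB ρ L μ Nt) (feasible μ L) p) ∧
    (∀ sel : ℕ → ℝ × ℝ,
      (∀ Nt : ℕ, 2 ≤ Nt →
        sel Nt ∈ feasible μ L ∧ IsMaxOn (capLB ρ L μ Nt) (feasible μ L) (sel Nt)) →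
      Tendsto (fun Nt : ℕ => (sel Nt).1 * Real.log (Nt : ℝ)) atTop (nhds L) ∧
      Tendsto (fun Nt : ℕ => (sel Nt).2 * Real.log (Nt : ℝ)) atTop (nhds (L / μ)) ∧
      Tendsto (fun Nt : ℕ =>
          capLB ρ L μ Nt (sel Nt) - Real.log (ρ * (Nt : ℝ))
            + 2 * Real.log (Real.log (Nt : ℝ)))
        atTop
        (nhds (Real.log (L ^ 2 * Real.log 2) - Real.log (μ * (1 + ρ⁻¹)) - 2
          - Real.log (1 + ρ)))) := by
  refine ⟨fun N hN => exists_max ρ L μ hρ hL hμ N hN, fun sel hsel => ?_⟩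
  have hlog2 := Real.log_pos (by norm_num : (1:ℝ) < 2)
  have hi : 0 < ρ⁻¹ := inv_pos.2 hρ
  set κ : ℝ := ρ * Real.log 2 / ((1 + ρ⁻¹) * (1 + ρ)) with hκ
  have hκ0 : 0 < κ := by positivity
  set H : ℝ := -((L + μ * (L / μ)) / L) + Real.log (κ * (L * (L / μ))) with hH
  have hl0 : ∀ᶠ N : ℕ in atTop, 0 < Real.log (N : ℝ) := tendsto_ell.eventually_gt_atTop 0
  -- the candidate
  set cand : ℕ → ℝ × ℝ := fun N => (L / Real.log N, (L / μ) / Real.log N) with hcand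
  have hc1 : Tendsto (fun N => (cand N).1 * Real.log N) atTop (nhds L) := by
    refine tendsto_const_nhds.congr' ?_
    filter_upwards [hl0] with N hN
    simp only [hcand]; field_simp
  have hc2 : Tendsto (fun N => (cand N).2 * Real.log N) atTop (nhds (L / μ)) := by
    refine tendsto_const_nhds.congr' ?_
    filter_upwards [hl0] with N hN
    simp only [hcand]; field_simp
  have hcA : Tendsto (fun N => AA ρ L μ N (cand N)) atTop (nhds H) := by
    refine (AA_tendsto ρ L μ hρ hL atTop le_rfl cand L (L / μ) ?_ hc1 hc2).1 (by positivity)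
    filter_upwards [hl0] with N hN
    simp only [hcand]
    constructor <;> positivity
  have hcG : Tendsto (fun N => capLB ρ L μ N (cand N) - Real.log N + 2 * Real.log (Real.log N))
      atTop (nhds H) := by
    simp_rw [capLB_eq]
    have hd := d_small (L / μ) (by positivity)
    have hinv : Tendsto (fun N : ℕ => (Real.log (N : ℝ))⁻¹) atTop (nhds 0) :=
      tendsto_inv_atTop_zero.comp tendsto_ell
    have h1 := hcA.sub (hd.mul (((hcA.mul hinv).add_const 1).sub (tendsto_loglog.const_mul 2)))
    rw [zero_mul, sub_zero] at h1
    refine h1.congr' ?_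
    filter_upwards [hl0] with N hN
    simp only [hcand]
    field_simp
  have hcF : ∀ᶠ N in atTop, cand N ∈ feasible μ L := by
    filter_upwards [tendsto_ell.eventually_ge_atTop 2] with N hN
    have hN0 : 0 < Real.log (N : ℝ) := by linarith
    refine ⟨by simp only [hcand]; positivity, by simp only [hcand]; positivity, ?_⟩
    have : (cand N).1 + μ * (cand N).2 = 2 * L / Real.log N := by
      simp only [hcand]; field_simp; ring
    rw [this, div_le_iff₀ hN0]
    nlinarith
  have hge : ∀ᶠ N in atTop, capLB ρ L μ N (cand N) - Real.log N + 2 * Real.log (Real.log N) ≤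
      capLB ρ L μ N (sel N) - Real.log N + 2 * Real.log (Real.log N) := by
    filter_upwards [hcF, eventually_ge_atTop 2] with N h1 h2
    have : capLB ρ L μ N (cand N) ≤ capLB ρ L μ N (sel N) := (hsel N h2).2 h1
    linarith
  have hle : ∀ᶠ N in atTop, capLB ρ L μ N (sel N) - Real.log N + 2 * Real.log (Real.log N) ≤
      AA ρ L μ N (sel N) := by
    filter_upwards [eventually_ge_atTop 2] with N h2
    exact capLB_le ρ L μ hρ hL N _ (hsel N h2).1
  have hselp : ∀ᶠ N in atTop, 0 ≤ (sel N).1 ∧ 0 ≤ (sel N).2 := by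
    filter_upwards [eventually_ge_atTop 2] with N h2
    exact ⟨(hsel N h2).1.1, (hsel N h2).1.2.1⟩
  obtain ⟨S, hS⟩ := s_bounded ρ L μ hρ hL hμ (H - 1)
  have hbd : ∀ᶠ N : ℕ in atTop, ((sel N).1 * Real.log N, (sel N).2 * Real.log N) ∈
      Set.Icc ((0:ℝ), (0:ℝ)) (S * L, S * L / μ) := by
    filter_upwards [hS, hge, hle, eventually_ge_atTop 2, hl0,
      hcG.eventually_const_lt (by linarith : H - 1 < H)] with N h1 h2 h3 h4 h5 h6
    have h7 := h1 (sel N) (hsel N h4).1 (by linarith)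
    obtain ⟨p1, p2, p3⟩ := (hsel N h4).1
    rw [div_le_iff₀ hL] at h7
    have u : 0 ≤ (sel N).1 * Real.log N := by positivity
    have v : 0 ≤ (sel N).2 * Real.log N := by positivity
    have v' := mul_nonneg hμ.le v
    refine ⟨⟨u, v⟩, ⟨?_, ?_⟩⟩
    · simp only; linarith
    · simp only; rw [le_div_iff₀ hμ]; linarith
  have hmain : Tendsto (fun N : ℕ => ((sel N).1 * Real.log N, (sel N).2 * Real.log N)) atTop
      (nhds (L, L / μ)) := by
    rw [Filter.tendsto_iff_ultrafilter]
    intro g hg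
    obtain ⟨⟨t, b⟩, hmem, hlim⟩ := (isCompact_Icc (a := ((0:ℝ), (0:ℝ)))
      (b := (S * L, S * L / μ))).ultrafilter_le_nhds
      (g.map (fun N : ℕ => ((sel N).1 * Real.log N, (sel N).2 * Real.log N)))
      (by rw [le_principal_iff]; exact hg hbd)
    have hlim' : Tendsto (fun N : ℕ => ((sel N).1 * Real.log N, (sel N).2 * Real.log N)) g
      (nhds (t, b)) := hlim
    have ht : Tendsto (fun N : ℕ => (sel N).1 * Real.log N) g (nhds t) := hlim'.fst_nhds
    have hb : Tendsto (fun N : ℕ => (sel N).2 * Real.log N) g (nhds b) := hlim'.snd_nhds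
    have ht0 : 0 ≤ t := hmem.1.1
    have hb0 : 0 ≤ b := hmem.1.2
    have hAt := AA_tendsto ρ L μ hρ hL g hg sel t b (hg hselp) ht hb
    have hgeA : ∀ᶠ N in (g : Filter ℕ), capLB ρ L μ N (cand N) - Real.log N
        + 2 * Real.log (Real.log N) ≤ AA ρ L μ N (sel N) := by
      apply hg
      filter_upwards [hge, hle] with N h1 h2 using h1.trans h2
    have hcg := hcG.mono_left hg
    have htb : 0 < t * b := by
      rcases (mul_nonneg ht0 hb0).lt_or_eq with h | h
      · exact h
      · exfalso
        have h1 := hAt.2 h.symm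
        obtain ⟨N, a1, a2, a3⟩ := ((h1.eventually_lt_atBot (H - 1)).and (hgeA.and
          (hcg.eventually_const_lt (by linarith : H - 1 < H)))).exists
        linarith
    have hlimle := le_of_tendsto_of_tendsto hcg (hAt.1 htb) hgeA
    have ht1 : 0 < t := by
      rcases ht0.lt_or_eq with h | h
      · exact h
      · rw [← h] at htb; simp at htb
    have hb1 : 0 < b := by
      rcases hb0.lt_or_eq with h | h
      · exact h
      · rw [← h] at htb; simp at htb
    have hx : 0 < t / L := by positivity
    have hy : 0 < μ * b / L := by positivity
    have e1 : Real.log (κ * (t * b)) = Real.log (κ * (L * (L / μ))) + Real.log (t / L)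
        + Real.log (μ * b / L) := by
      rw [← Real.log_mul (by positivity) (by positivity), ← Real.log_mul (by positivity) (by positivity)]
      congr 1; field_simp
    have e2 : (L + μ * (L / μ)) / L = 2 := by field_simp; norm_num
    have e3 : (t + μ * b) / L = t / L + μ * b / L := by ring
    rw [hH, ← hκ, e1, e2, e3] at hlimle
    have k1 := Real.log_le_sub_one_of_pos hx
    have k2 := Real.log_le_sub_one_of_pos hy
    have x1 : t / L = 1 := by
      by_contra hne
      have := Real.log_lt_sub_one_of_pos hx hne
      linarith
    have y1 : μ * b / L = 1 := by
      by_contra hne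
      have := Real.log_lt_sub_one_of_pos hy hne
      linarith
    have tt : t = L := by field_simp at x1; exact x1
    have bb : b = L / μ := by field_simp at y1 ⊢; linarith
    rw [← tt, ← tt] at *
    rw [← bb]
    exact hlim'
  have r1 : Tendsto (fun N : ℕ => (sel N).1 * Real.log N) atTop (nhds L) := hmain.fst_nhds
  have r2 : Tendsto (fun N : ℕ => (sel N).2 * Real.log N) atTop (nhds (L / μ)) := hmain.snd_nhds
  refine ⟨r1, r2, ?_⟩
  have r3 := (AA_tendsto ρ L μ hρ hL atTop le_rfl sel L (L / μ) hselp r1 r2).1 (by positivity)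
  have r4 := tendsto_of_tendsto_of_tendsto_of_le_of_le' hcG r3 hge hle
  have r5 := r4.sub_const (Real.log ρ)
  have e : H - Real.log ρ = Real.log (L ^ 2 * Real.log 2) - Real.log (μ * (1 + ρ⁻¹)) - 2
          - Real.log (1 + ρ) := by
    have e1 : κ * (L * (L / μ)) = ρ * (L ^ 2 * Real.log 2) / ((μ * (1 + ρ⁻¹)) * (1 + ρ)) := by
      rw [hκ]; field_simp
    have e2 : (L + μ * (L / μ)) / L = 2 := by field_simp; norm_num
    rw [hH, e1, e2, Real.log_div (by positivity) (by positivity),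
      Real.log_mul (x := ρ) (by positivity) (by positivity),
      Real.log_mul (x := μ * (1 + ρ⁻¹)) (by positivity) (by positivity)]
    ring
  rw [e] at r5
  refine r5.congr' ?_
  filter_upwards [eventually_ge_atTop 2] with N hN
  have : (N:ℝ) ≠ 0 := by positivity
  rw [Real.log_mul hρ.ne' this]
  ring
end
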